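/- If τ ≥ τ_n(p_n), τ → 0, p_n → ∞ and p_n = o(n), then there exists a large enough constant L > 0 such that liminf_{n→∞} inf_{θ_0 ∈ ℓ0[p_n]} P_{θ_0}( θ_0 ∈ Ĉ_n(L, τ) ) ≥ 1 − α. -/

import Mathlib

open MeasureTheory ProbabilityTheory Filter Set Real Asymptotics
open scoped ENNReal NNReal BigOperators

noncomputable section

/-- Standard normal density `φ`. -/
def phiN (x : ℝ) : ℝ := (Real.sqrt (2 * Real.pi))⁻¹ * Real.exp (-(x ^ 2) / 2)

/-- Horseshoe prior density with global parameter `τ`. -/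
def gHS (τ θ : ℝ) : ℝ :=
  ∫ l in Set.Ioi (0 : ℝ), phiN (θ / (l * τ)) / (l * τ) * (2 / (Real.pi * (1 + l ^ 2)))

/-- Unnormalised marginal posterior density of `θᵢ` given `Yᵢ = y` (parameter `τ`). -/
def postDens (τ y θ : ℝ) : ℝ := phiN (y - θ) * gHS τ θ

/-- Bayesian marginal density `ψ_τ(y)` of one observation. -/
def margDens (τ y : ℝ) : ℝ := ∫ θ, postDens τ y θ

/-- Marginal posterior probability `Π(θᵢ ∈ A | Yᵢ = y, τ)`. -/
def postProb (τ y : ℝ) (A : Set ℝ) : ℝ := (∫ θ in A, postDens τ y θ) / margDens τ y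

/-- Marginal posterior mean `θ̂ᵢ(τ)`. -/
def postMean (τ y : ℝ) : ℝ := (∫ θ, θ * postDens τ y θ) / margDens τ y

/-- Marginal posterior variance. -/
def postVar (τ y : ℝ) : ℝ :=
  (∫ θ, (θ - postMean τ y) ^ 2 * postDens τ y θ) / margDens τ y

/-- Marginal posterior fourth central moment. -/
def postMom4 (τ y : ℝ) : ℝ :=
  (∫ θ, (θ - postMean τ y) ^ 4 * postDens τ y θ) / margDens τ y

/-- `ζ_τ = √(2 log (1/τ))`. -/
def zet (τ : ℝ) : ℝ := Real.sqrt (2 * Real.log (1 / τ))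

/-- `τ_n(p) = (p/n) √(log (n/p))`. -/
def tauOpt (n p : ℕ) : ℝ := ((p : ℝ) / (n : ℝ)) * Real.sqrt (Real.log ((n : ℝ) / (p : ℝ)))

/-- The law `P_{θ₀}` of `Y^n`. -/
def Pdata {n : ℕ} (θ₀ : Fin n → ℝ) : Measure (Fin n → ℝ) :=
  Measure.pi fun i => gaussianReal (θ₀ i) 1

/-- The standard normal upper `α`-quantile `z_α`. -/
def zquant (α : ℝ) : ℝ := sInf {z : ℝ | ((gaussianReal 0 1) (Set.Ioi z)).toReal ≤ α}

/-- Nearly black vectors `ℓ₀[p]`. -/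
def nearlyBlack (n p : ℕ) : Set (Fin n → ℝ) :=
  {θ | ({i | θ i ≠ 0} : Set (Fin n)).ncard ≤ p}

/-- Unnormalised posterior density of the full vector `θ` given `Y^n = y` and `τ`. -/
def fullDens {n : ℕ} (τ : ℝ) (y θ : Fin n → ℝ) : ℝ := ∏ i, postDens τ (y i) (θ i)

/-- Posterior probability `Π(θ ∈ A | Y^n = y, τ)` of a set of vectors. -/
def fullPostProb {n : ℕ} (τ : ℝ) (y : Fin n → ℝ) (A : Set (Fin n → ℝ)) : ℝ :=
  (∫ θ in A, fullDens τ y θ) / ∫ θ, fullDens τ y θ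

/-- Posterior mean of the full vector (coordinatewise, by conditional independence). -/
def fullPostMean {n : ℕ} (τ : ℝ) (y : Fin n → ℝ) : Fin n → ℝ := fun i => postMean τ (y i)

/-- Euclidean distance on `ℝⁿ`. -/
def l2dist {n : ℕ} (a b : Fin n → ℝ) : ℝ := Real.sqrt (∑ i, (a i - b i) ^ 2)

/-- Marginal likelihood of `τ`. -/
def lik {n : ℕ} (τ : ℝ) (y : Fin n → ℝ) : ℝ := ∏ i, margDens τ (y i)

/-- Unnormalised hierarchical posterior weight of `τ` given the data. -/
def hierWeight {n : ℕ} (pr : ℝ → ℝ) (y : Fin n → ℝ) (τ : ℝ) : ℝ := pr τ * lik τ y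

/-- Hierarchical posterior distribution of `τ`. -/
def hierTauProb {n : ℕ} (pr : ℝ → ℝ) (y : Fin n → ℝ) (A : Set ℝ) : ℝ :=
  (∫ τ in A, hierWeight pr y τ) / ∫ τ, hierWeight pr y τ

/-- Hierarchical marginal posterior probability for coordinate `i`. -/
def hierPostProb {n : ℕ} (pr : ℝ → ℝ) (y : Fin n → ℝ) (i : Fin n) (A : Set ℝ) : ℝ :=
  (∫ τ, hierWeight pr y τ * postProb τ (y i) A) / ∫ τ, hierWeight pr y τ

/-- Hierarchical marginal posterior mean for coordinate `i`. -/
def hierPostMean {n : ℕ} (pr : ℝ → ℝ) (y : Fin n → ℝ) (i : Fin n) : ℝ :=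
  (∫ τ, hierWeight pr y τ * postMean τ (y i)) / ∫ τ, hierWeight pr y τ

/-- Hierarchical posterior probability of a set of vectors. -/
def hierFullPostProb {n : ℕ} (pr : ℝ → ℝ) (y : Fin n → ℝ) (A : Set (Fin n → ℝ)) : ℝ :=
  (∫ τ, pr τ * ∫ θ in A, fullDens τ y θ) / ∫ τ, pr τ * ∫ θ, fullDens τ y θ

/-- Hierarchical posterior mean vector. -/
def hierFullPostMean {n : ℕ} (pr : ℝ → ℝ) (y : Fin n → ℝ) : Fin n → ℝ :=
  fun i => hierPostMean pr y i

/-- The functions `I_k`. -/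
def Ik (τ k y : ℝ) : ℝ :=
  ∫ z in Set.Ioc (0 : ℝ) 1, z ^ k * (τ ^ 2 + (1 - τ ^ 2) * z)⁻¹ * Real.exp (y ^ 2 * z / 2)

/-- The function `m_τ`. -/
def mHS (τ y : ℝ) : ℝ :=
  y ^ 2 * ((Ik τ (1 / 2) y - Ik τ (3 / 2) y) / Ik τ (-(1 / 2)) y) -
    Ik τ (1 / 2) y / Ik τ (-(1 / 2)) y

/-- The excessive-bias restriction with witness `q`. -/
def EBRwith (n : ℕ) (A Cs C : ℝ) (θ : Fin n → ℝ) (q : ℕ) : Prop :=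
  1 ≤ q ∧
    (∑ i, if |θ i| < A * Real.sqrt (2 * Real.log ((n : ℝ) / (q : ℝ))) then (θ i) ^ 2 else 0)
        ≤ C * (q : ℝ) * Real.log ((n : ℝ) / (q : ℝ)) ∧
    (q : ℝ) / Cs ≤
      (({i | A * Real.sqrt (2 * Real.log ((n : ℝ) / (q : ℝ))) ≤ |θ i|} : Set (Fin n)).ncard : ℝ)

/-- The excessive-bias restriction. -/
def EBR (n : ℕ) (A Cs C : ℝ) (θ : Fin n → ℝ) : Prop := ∃ q, EBRwith n A Cs C θ q

/-- The class `Θ[p]`. -/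
def ThetaClass (n p : ℕ) (A Cs C : ℝ) : Set (Fin n → ℝ) :=
  {θ | θ ∈ nearlyBlack n p ∧ EBR n A Cs C θ}

/-- Smallest witness `q` in the excessive-bias restriction. -/
def qmin (n : ℕ) (A Cs C : ℝ) (θ : Fin n → ℝ) : ℕ := sInf {q | EBRwith n A Cs C θ q}

/-- `p̃(θ₀)`: the number of coordinates above threshold for the smallest witness `q`. -/
def ptilde (n : ℕ) (A Cs C : ℝ) (θ : Fin n → ℝ) : ℕ :=
  ({i | A * Real.sqrt (2 * Real.log ((n : ℝ) / (qmin n A Cs C θ : ℝ))) ≤ |θ i|} :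
    Set (Fin n)).ncard

lemma phiN_pos (x : ℝ) : 0 < phiN x := by unfold phiN; positivity

lemma sqrt2pi_ge : (1 : ℝ) ≤ Real.sqrt (2 * Real.pi) := by
  rw [Real.one_le_sqrt]; linarith [Real.pi_gt_three]

lemma sqrt2pi_le : Real.sqrt (2 * Real.pi) ≤ 2.6 := by
  rw [Real.sqrt_le_left (by norm_num)]; linarith [Real.pi_lt_d2]

lemma phiN_le_exp (x : ℝ) : phiN x ≤ Real.exp (-(x ^ 2) / 2) := by
  unfold phiN
  have h : (Real.sqrt (2 * Real.pi))⁻¹ ≤ 1 := inv_le_one_of_one_le₀ sqrt2pi_ge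
  have := Real.exp_pos (-(x ^ 2) / 2)
  nlinarith

lemma phiN_ge_exp (x : ℝ) : Real.exp (-(x ^ 2) / 2) / 2.6 ≤ phiN x := by
  unfold phiN
  have h : (2.6 : ℝ)⁻¹ ≤ (Real.sqrt (2 * Real.pi))⁻¹ :=
    inv_anti₀ (lt_of_lt_of_le one_pos sqrt2pi_ge) sqrt2pi_le
  have := Real.exp_pos (-(x ^ 2) / 2)
  rw [div_eq_mul_inv, mul_comm]
  gcongr

lemma phiN_le_one (x : ℝ) : phiN x ≤ 1 :=
  (phiN_le_exp x).trans (Real.exp_le_one_iff.2 (by nlinarith [sq_nonneg x]))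

lemma phiN_anti {x y : ℝ} (h : x ^ 2 ≤ y ^ 2) : phiN y ≤ phiN x := by
  unfold phiN
  gcongr

lemma phiN_one_ge : (1 / 5 : ℝ) ≤ phiN 1 := by
  refine le_trans ?_ (phiN_ge_exp 1)
  have h : Real.exp (1/2) ≤ 1.7 := by
    have h1 : Real.exp 1 ≤ 2.7182818286 := Real.exp_one_lt_d9.le
    have h2 : Real.exp (1/2) * Real.exp (1/2) = Real.exp 1 := by
      rw [← Real.exp_add]; norm_num
    nlinarith [Real.exp_pos (1/2)]
  have h3 : (1.7 : ℝ)⁻¹ ≤ Real.exp (-(1 ^ 2) / 2) := by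
    rw [show (-(1:ℝ) ^ 2) / 2 = -(1/2) by norm_num, Real.exp_neg]
    exact inv_anti₀ (Real.exp_pos _) h
  norm_num at h3 ⊢
  linarith

lemma phiN_two_ge : (1 / 20 : ℝ) ≤ phiN 2 := by
  refine le_trans ?_ (phiN_ge_exp 2)
  have h1 : Real.exp 1 ≤ 2.7182818286 := Real.exp_one_lt_d9.le
  have h2 : Real.exp 2 = Real.exp 1 * Real.exp 1 := by
      rw [← Real.exp_add]; norm_num
  have h : Real.exp 2 ≤ 7.5 := by nlinarith [Real.exp_pos 1]
  have h3 : (7.5 : ℝ)⁻¹ ≤ Real.exp (-(2 ^ 2) / 2) := by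
    rw [show (-(2:ℝ) ^ 2) / 2 = -2 by norm_num, Real.exp_neg]
    exact inv_anti₀ (Real.exp_pos _) h
  norm_num at h3 ⊢
  linarith

lemma phiN_cont : Continuous phiN := by unfold phiN; fun_prop

lemma phiN_eq_pdf (m x : ℝ) : phiN (x - m) = gaussianPDFReal m 1 x := by
  simp [phiN, gaussianPDFReal]

lemma phiN_eq_pdf' (m x : ℝ) : phiN (m - x) = gaussianPDFReal m 1 x := by
  rw [← phiN_eq_pdf]; unfold phiN; congr 3; ring

lemma phiN_integrable : Integrable phiN := by
  have := integrable_gaussianPDFReal 0 1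
  refine this.congr (Eventually.of_forall fun x => ?_)
  simp [← phiN_eq_pdf]

lemma phiN_integral : ∫ x, phiN x = 1 := by
  rw [← integral_gaussianPDFReal_eq_one 0 (v := 1) one_ne_zero]
  congr 1; ext x; simp [← phiN_eq_pdf]

lemma phiN_sub_integrable (y : ℝ) : Integrable fun θ => phiN (y - θ) := by
  simp_rw [phiN_eq_pdf']; exact integrable_gaussianPDFReal y 1

lemma phiN_sub_integral (y : ℝ) : ∫ θ, phiN (y - θ) = 1 := by
  simp_rw [phiN_eq_pdf']; exact integral_gaussianPDFReal_eq_one y one_ne_zero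

/-- integrand of the horseshoe density -/
def hsI (τ θ l : ℝ) : ℝ := phiN (θ / (l * τ)) / (l * τ) * (2 / (Real.pi * (1 + l ^ 2)))

lemma hsI_nonneg {τ : ℝ} (hτ : 0 < τ) (θ : ℝ) {l : ℝ} (hl : 0 < l) : 0 ≤ hsI τ θ l := by
  have := phiN_pos (θ / (l * τ))
  unfold hsI; positivity

lemma gHS_eq (τ θ : ℝ) : gHS τ θ = ∫ l in Set.Ioi (0 : ℝ), hsI τ θ l := rfl

lemma hsI_meas (τ : ℝ) : Measurable (fun q : ℝ × ℝ => hsI τ q.1 q.2) := by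
  have := phiN_cont.measurable
  unfold hsI; fun_prop

lemma gHS_meas (τ : ℝ) : Measurable (gHS τ) := by
  have : StronglyMeasurable (fun θ => ∫ l in Set.Ioi (0 : ℝ), hsI τ θ l) :=
    StronglyMeasurable.integral_prod_right (hsI_meas τ).stronglyMeasurable
  exact this.measurable

lemma gHS_nonneg {τ : ℝ} (hτ : 0 < τ) (θ : ℝ) : 0 ≤ gHS τ θ := by
  rw [gHS_eq]
  exact setIntegral_nonneg measurableSet_Ioi fun l hl => hsI_nonneg hτ θ hl

lemma cauchy_integrable : Integrable (fun l : ℝ => 2 / (Real.pi * (1 + l ^ 2))) := by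
  have := integrable_inv_one_add_sq.const_mul (2 / Real.pi)
  refine this.congr (Eventually.of_forall fun x => ?_)
  field_simp

lemma hsI_integral_left {τ l : ℝ} (hτ : 0 < τ) (hl : 0 < l) :
    ∫ θ, hsI τ θ l = 2 / (Real.pi * (1 + l ^ 2)) := by
  unfold hsI
  rw [integral_mul_const, integral_div, Measure.integral_comp_div, phiN_integral]
  have : 0 < l * τ := by positivity
  rw [abs_of_pos this]; field_simp; simp

lemma hsI_prod_integrable {τ : ℝ} (hτ : 0 < τ) :
    Integrable (fun q : ℝ × ℝ => hsI τ q.1 q.2)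
      ((volume : Measure ℝ).prod (volume.restrict (Set.Ioi 0))) := by
  rw [integrable_prod_iff' (hsI_meas τ).aestronglyMeasurable]
  refine ⟨?_, ?_⟩
  · filter_upwards [ae_restrict_mem measurableSet_Ioi] with l hl
    have hl : 0 < l := hl
    unfold hsI
    refine Integrable.mul_const (Integrable.div_const ?_ _) _
    exact phiN_integrable.comp_div (by positivity)
  · have : Integrable (fun l : ℝ => 2 / (Real.pi * (1 + l ^ 2))) (volume.restrict (Set.Ioi 0)) :=
      cauchy_integrable.integrableOn
    refine this.congr ?_
    filter_upwards [ae_restrict_mem measurableSet_Ioi] with l hl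
    rw [← hsI_integral_left hτ hl]
    congr 1; ext θ
    simp [abs_of_nonneg (hsI_nonneg hτ θ hl)]

lemma gHS_integrable {τ : ℝ} (hτ : 0 < τ) : Integrable (gHS τ) :=
  (hsI_prod_integrable hτ).integral_prod_left

lemma gHS_integral {τ : ℝ} (hτ : 0 < τ) : ∫ θ, gHS τ θ = 1 := by
  have h : ∫ θ, gHS τ θ = ∫ l in Set.Ioi (0:ℝ), ∫ θ, hsI τ θ l :=
    integral_integral_swap (hsI_prod_integrable hτ)
  have h2 : ∫ l in Set.Ioi (0:ℝ), ∫ θ, hsI τ θ l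
      = ∫ l in Set.Ioi (0:ℝ), (2 / Real.pi) * (1 + l ^ 2)⁻¹ := by
    refine setIntegral_congr_fun measurableSet_Ioi fun l hl => ?_
    simp only [hsI_integral_left hτ hl]
    field_simp
  rw [h, h2, integral_const_mul, integral_Ioi_inv_one_add_sq]
  simp

lemma hsI_le {τ θ l : ℝ} (hτ : 0 < τ) (hθ : θ ≠ 0) (hl : 0 < l) :
    hsI τ θ l ≤ |θ|⁻¹ * (2 / (Real.pi * (1 + l ^ 2))) := by
  unfold hsI
  have h1 : |θ / (l * τ)| * phiN (θ / (l * τ)) ≤ 1 := by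
    set u := θ / (l * τ)
    have h2 := phiN_le_exp u
    have h3 : |u| ≤ Real.exp (u ^ 2 / 2) := by
      have := Real.add_one_le_exp (u ^ 2 / 2)
      nlinarith [sq_nonneg (|u| - 1), sq_abs u]
    calc |u| * phiN u ≤ Real.exp (u ^ 2 / 2) * Real.exp (-(u ^ 2) / 2) := by
          gcongr
          exact (phiN_pos u).le
      _ = 1 := by rw [← Real.exp_add]; simp; ring
  have hlt : 0 < l * τ := by positivity
  have : phiN (θ / (l * τ)) / (l * τ) ≤ |θ|⁻¹ := by
    rw [abs_div, abs_of_pos hlt] at h1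
    have hθ' : 0 < |θ| := abs_pos.2 hθ
    rw [div_le_iff₀ hlt, inv_mul_eq_div, le_div_iff₀ hθ']
    rw [div_mul_eq_mul_div, div_le_iff₀ hlt] at h1
    linarith
  gcongr

lemma hsI_integrableOn {τ θ : ℝ} (hτ : 0 < τ) (hθ : θ ≠ 0) :
    IntegrableOn (hsI τ θ) (Set.Ioi 0) := by
  refine Integrable.mono' (cauchy_integrable.const_mul |θ|⁻¹).integrableOn ?_ ?_
  · exact ((hsI_meas τ).comp (measurable_const.prodMk measurable_id)).aestronglyMeasurable
  · filter_upwards [ae_restrict_mem measurableSet_Ioi] with l hl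
    rw [Real.norm_of_nonneg (hsI_nonneg hτ θ hl)]
    exact hsI_le hτ hθ hl

lemma gHS_lower {τ θ : ℝ} (hτ : 0 < τ) (hθ : τ ≤ |θ|) : τ / (100 * θ ^ 2) ≤ gHS τ θ := by
  have hθp : 0 < |θ| := hτ.trans_le hθ
  have hθ0 : θ ≠ 0 := abs_pos.1 hθp
  have hsub : Set.Icc (|θ| / τ) (2 * |θ| / τ) ⊆ Set.Ioi 0 := fun l hl =>
    lt_of_lt_of_le (by positivity : 0 < |θ| / τ) hl.1
  rw [gHS_eq]
  have h1 : ∫ l in Set.Icc (|θ| / τ) (2 * |θ| / τ), hsI τ θ l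
      ≤ ∫ l in Set.Ioi (0 : ℝ), hsI τ θ l := by
    refine setIntegral_mono_set (hsI_integrableOn hτ hθ0) ?_ hsub.eventuallyLE
    filter_upwards [ae_restrict_mem measurableSet_Ioi] with l hl
    exact hsI_nonneg hτ θ hl
  refine le_trans ?_ h1
  have h2 : ∀ l ∈ Set.Icc (|θ| / τ) (2 * |θ| / τ),
      (τ ^ 2 / (100 * |θ| ^ 3)) ≤ hsI τ θ l := by
    intro l hl
    have hl0 : 0 < l := hsub hl
    have hlt1 : |θ| ≤ l * τ := by have := hl.1; rwa [div_le_iff₀ hτ] at this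
    have hlt2 : l * τ ≤ 2 * |θ| := by have := hl.2; rwa [le_div_iff₀ hτ] at this
    have hp : (1/5 : ℝ) ≤ phiN (θ / (l * τ)) := by
      refine phiN_one_ge.trans (phiN_anti ?_)
      rw [one_pow, sq_le_one_iff_abs_le_one, abs_div, abs_of_pos (by positivity : 0 < l * τ)]
      rw [div_le_one (by positivity)]; exact hlt1
    have h3 : (1/5 : ℝ) / (2 * |θ|) ≤ phiN (θ / (l * τ)) / (l * τ) := by gcongr
    have h4 : 2 / (Real.pi * (5 * |θ| ^ 2 / τ ^ 2)) ≤ 2 / (Real.pi * (1 + l ^ 2)) := by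
      gcongr
      rw [le_div_iff₀ (by positivity)]
      nlinarith
    have h5 : (1/5 : ℝ) / (2 * |θ|) * (2 / (Real.pi * (5 * |θ| ^ 2 / τ ^ 2))) ≤ hsI τ θ l := by
      unfold hsI; gcongr
    refine le_trans ?_ h5
    have : (1/5 : ℝ) / (2 * |θ|) * (2 / (Real.pi * (5 * |θ| ^ 2 / τ ^ 2)))
      = τ ^ 2 / (25 * Real.pi * |θ| ^ 3) := by field_simp; ring
    rw [this]
    gcongr
    linarith [Real.pi_lt_four]
  have h6 := setIntegral_mono_on (μ := volume) (s := Set.Icc (|θ| / τ) (2 * |θ| / τ))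
    (f := fun _ => τ ^ 2 / (100 * |θ| ^ 3)) (g := hsI τ θ)
    (integrableOn_const (by simp)) ((hsI_integrableOn hτ hθ0).mono_set hsub) measurableSet_Icc h2
  refine le_trans (le_of_eq ?_) h6
  rw [setIntegral_const, Measure.real, Real.volume_Icc, ENNReal.toReal_ofReal]
  · rw [← sq_abs θ, smul_eq_mul]; field_simp; ring
  · rw [sub_nonneg]; gcongr; linarith

lemma gHS_upper {τ θ : ℝ} (hτ : 0 < τ) (hθ : θ ≠ 0) : gHS τ θ ≤ τ / θ ^ 2 := by
  -- antiderivative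
  set k : ℝ := 2 * τ ^ 2 / θ ^ 2 with hk
  have hkpos : 0 < k := by positivity
  set f : ℝ → ℝ := fun l => expNegInvGlue (k * l ^ 2) with hf
  set f' : ℝ → ℝ := fun l => Real.exp (-(k * l ^ 2)⁻¹) * (2 / (k * l ^ 3)) with hf'
  have hcont : Continuous f := by
    have := (expNegInvGlue.contDiff (n := 0)).continuous
    rw [hf]; fun_prop
  have hfe : ∀ l : ℝ, 0 < l → f l = Real.exp (-(k * l ^ 2)⁻¹) := by
    intro l hl
    have : ¬ (k * l ^ 2 ≤ 0) := not_le.2 (by positivity)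
    simp only [hf, expNegInvGlue, this, if_false]
  have hder : ∀ l ∈ Set.Ioi (0:ℝ), HasDerivAt f (f' l) l := by
    intro l hl
    have hl : 0 < l := hl
    have h0 : HasDerivAt (fun l : ℝ => Real.exp (-(k * l ^ 2)⁻¹)) (f' l) l := by
      have h1 : HasDerivAt (fun l : ℝ => k * l ^ 2) (k * (2 * l)) l := by
        simpa using (hasDerivAt_pow 2 l).const_mul k
      have h2 : HasDerivAt (fun l : ℝ => Real.exp (-(k * l ^ 2)⁻¹))
          (Real.exp (-(k * l ^ 2)⁻¹) * (-(-(k * (2 * l)) / (k * l ^ 2) ^ 2))) l :=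
        ((h1.inv (by positivity)).neg).exp
      convert h2 using 1
      change Real.exp (-(k * l ^ 2)⁻¹) * (2 / (k * l ^ 3)) = _
      congr 1
      field_simp
    refine h0.congr_of_eventuallyEq ?_
    filter_upwards [lt_mem_nhds hl] with x hx
    exact hfe x hx
  have hpos : ∀ l ∈ Set.Ioi (0:ℝ), 0 ≤ f' l := by
    intro l hl
    have hl : 0 < l := hl
    simp only [hf']; positivity
  have hlim : Tendsto f atTop (nhds 1) := by
    have h1 : Tendsto (fun l : ℝ => Real.exp (-(k * l ^ 2)⁻¹)) atTop (nhds 1) := by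
      have h2 : Tendsto (fun l : ℝ => (k * l ^ 2)⁻¹) atTop (nhds 0) :=
        tendsto_inv_atTop_zero.comp
          ((tendsto_pow_atTop two_ne_zero).const_mul_atTop hkpos)
      have h3 := (Real.continuous_exp.tendsto (-0)).comp h2.neg
      rw [neg_zero, Real.exp_zero] at h3
      exact h3
    refine h1.congr' ?_
    filter_upwards [eventually_gt_atTop 0] with l hl
    rw [hfe l hl]
  have hIntegr := integrableOn_Ioi_deriv_of_nonneg hcont.continuousWithinAt hder hpos hlim
  have hval := integral_Ioi_of_hasDerivAt_of_nonneg hcont.continuousWithinAt hder hpos hlim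
  have hf0 : f 0 = 0 := by simp [hf]
  rw [hf0, sub_zero] at hval
  have hle : ∀ l ∈ Set.Ioi (0:ℝ), hsI τ θ l ≤ (τ / θ ^ 2) * f' l := by
    intro l hl
    have hl : 0 < l := hl
    have e1 : phiN (θ / (l * τ)) ≤ Real.exp (-(k * l ^ 2)⁻¹) := by
      refine (phiN_le_exp _).trans (le_of_eq ?_)
      congr 1
      rw [hk]; field_simp
    have e2 : 2 / (Real.pi * (1 + l ^ 2)) ≤ 1 / l ^ 2 := by
      rw [div_le_div_iff₀ (by positivity) (by positivity)]
      nlinarith [Real.pi_gt_three, sq_nonneg l]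
    calc hsI τ θ l ≤ Real.exp (-(k * l ^ 2)⁻¹) / (l * τ) * (1 / l ^ 2) := by
          unfold hsI; gcongr
      _ = (τ / θ ^ 2) * f' l := by
          simp only [hf', hk]; field_simp
  rw [gHS_eq]
  calc ∫ l in Set.Ioi (0 : ℝ), hsI τ θ l ≤ ∫ l in Set.Ioi (0 : ℝ), (τ / θ ^ 2) * f' l :=
        setIntegral_mono_on (hsI_integrableOn hτ hθ) (hIntegr.const_mul _) measurableSet_Ioi hle
    _ = τ / θ ^ 2 := by rw [integral_const_mul, hval, mul_one]


lemma postDens_nonneg {τ : ℝ} (hτ : 0 < τ) (y θ : ℝ) : 0 ≤ postDens τ y θ :=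
  mul_nonneg (phiN_pos _).le (gHS_nonneg hτ θ)

lemma sq_mul_exp_le (u : ℝ) : u ^ 2 * phiN u ≤ 2 := by
  have h2 := phiN_le_exp u
  have h3 : u ^ 2 ≤ 2 * Real.exp (u ^ 2 / 2) := by
    have := Real.add_one_le_exp (u ^ 2 / 2)
    linarith
  calc u ^ 2 * phiN u ≤ 2 * Real.exp (u ^ 2 / 2) * Real.exp (-(u ^ 2) / 2) := by
        gcongr
        exact (phiN_pos u).le
    _ = 2 := by rw [mul_assoc, ← Real.exp_add]; ring_nf; simp

lemma wint {τ : ℝ} (hτ : 0 < τ) (y : ℝ) {w : ℝ → ℝ} (hw : Measurable w) (K : ℝ)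
    (hK : ∀ θ, |w θ| ≤ K * (1 + θ ^ 2)) : Integrable (fun θ => w θ * postDens τ y θ) := by
  have hK0 : 0 ≤ K := by have := (abs_nonneg _).trans (hK 0); simpa using this
  have h := (gHS_integrable hτ).bdd_mul (f := fun θ => w θ * phiN (y - θ))
    (c := K * (5 + 2 * y ^ 2)) ?_ ?_
  · refine h.congr (Eventually.of_forall fun θ => ?_)
    simp only [postDens]; ring
  · have := phiN_cont.measurable
    exact (by fun_prop : Measurable fun θ => w θ * phiN (y - θ)).aestronglyMeasurable
  · refine Eventually.of_forall fun θ => ?_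
    rw [Real.norm_eq_abs, abs_mul, abs_of_pos (phiN_pos _)]
    have h1 := sq_mul_exp_le (y - θ)
    have h2 := phiN_le_one (y - θ)
    have h3 := phiN_pos (y - θ)
    have h4 : 1 + θ ^ 2 ≤ 1 + 2 * (y - θ) ^ 2 + 2 * y ^ 2 := by nlinarith [sq_nonneg (2 * y - θ)]
    have h5 : (1 + θ ^ 2) * phiN (y - θ) ≤ 5 + 2 * y ^ 2 := by
      calc (1 + θ ^ 2) * phiN (y - θ) ≤ (1 + 2 * (y - θ) ^ 2 + 2 * y ^ 2) * phiN (y - θ) := by gcongr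
        _ ≤ 5 + 2 * y ^ 2 := by nlinarith [sq_nonneg y]
    calc |w θ| * phiN (y - θ) ≤ K * (1 + θ ^ 2) * phiN (y - θ) := by gcongr; exact hK θ
      _ ≤ K * (5 + 2 * y ^ 2) := by rw [mul_assoc]; gcongr

lemma postDens_integrable {τ : ℝ} (hτ : 0 < τ) (y : ℝ) : Integrable (postDens τ y) := by
  have := wint hτ y (w := fun _ => 1) measurable_const 1 (by intro θ; simp; positivity)
  simpa using this

lemma postInt_lower {τ : ℝ} (hτ : 0 < τ) (y : ℝ) {w : ℝ → ℝ} (hw : Measurable w) (K : ℝ)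
    (hK : ∀ θ, |w θ| ≤ K * (1 + θ ^ 2)) (hw0 : ∀ θ, 0 ≤ w θ) {a b k : ℝ} (hab : a ≤ b)
    (hk : ∀ θ ∈ Set.Icc a b, k ≤ w θ * postDens τ y θ) :
    k * (b - a) ≤ ∫ θ, w θ * postDens τ y θ := by
  have hi := wint hτ y hw K hK
  have h1 := setIntegral_le_integral (s := Set.Icc a b) hi
    (Eventually.of_forall fun θ => mul_nonneg (hw0 θ) (postDens_nonneg hτ y θ))
  refine le_trans ?_ h1
  have h6 := setIntegral_mono_on (μ := volume) (s := Set.Icc a b)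
    (f := fun _ => k) (g := fun θ => w θ * postDens τ y θ)
    (integrableOn_const (by simp)) hi.integrableOn measurableSet_Icc hk
  refine le_trans (le_of_eq ?_) h6
  rw [setIntegral_const, Measure.real, Real.volume_Icc, ENNReal.toReal_ofReal (by linarith)]
  rw [smul_eq_mul, mul_comm]

lemma marg_lower {τ : ℝ} (hτ : 0 < τ) (y : ℝ) {a b k : ℝ} (hab : a ≤ b)
    (hk : ∀ θ ∈ Set.Icc a b, k ≤ postDens τ y θ) : k * (b - a) ≤ margDens τ y := by
  have := postInt_lower hτ y (w := fun _ => 1) measurable_const 1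
    (by intro θ; simp; positivity) (by simp) hab (k := k) (by simpa using hk)
  simpa [margDens] using this

lemma exp_neg_half_ge : (1/2 : ℝ) ≤ Real.exp (-(1/2)) := by
  have := Real.add_one_le_exp (-(1/2) : ℝ); linarith

lemma phi_shift {y θ : ℝ} (h : (y - θ) ^ 2 ≤ y ^ 2 + 1) : phiN y / 2 ≤ phiN (y - θ) := by
  have h1 : phiN y * Real.exp (-(1/2)) ≤ phiN (y - θ) := by
    unfold phiN
    rw [mul_assoc, ← Real.exp_add]
    gcongr
    linarith
  nlinarith [exp_neg_half_ge, phiN_pos y]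

lemma postDens_near {τ : ℝ} (hτ : 0 < τ) (hτ2 : τ ≤ 1/2) {y θ : ℝ} (hy : 0 ≤ y * θ)
    (h1 : τ ≤ |θ|) (h2 : |θ| ≤ 2 * τ) : phiN y / (800 * τ) ≤ postDens τ y θ := by
  have hθ : θ ^ 2 ≤ 1 := by
    rw [sq_le_one_iff_abs_le_one]; linarith
  have h3 : phiN y / 2 ≤ phiN (y - θ) := phi_shift (by nlinarith)
  have hθp : 0 < |θ| := hτ.trans_le h1
  have hθ0 : θ ≠ 0 := abs_pos.1 hθp
  have h4 : τ / (100 * (2 * τ) ^ 2) ≤ gHS τ θ := by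
    refine le_trans ?_ (gHS_lower hτ h1)
    rw [← sq_abs θ]
    gcongr
  have := phiN_pos y
  calc phiN y / (800 * τ) = phiN y / 2 * (τ / (100 * (2 * τ) ^ 2)) := by field_simp; norm_num
    _ ≤ postDens τ y θ := by unfold postDens; gcongr; exact (phiN_pos _).le

lemma marg_ge_phi {τ : ℝ} (hτ : 0 < τ) (hτ2 : τ ≤ 1/2) (y : ℝ) :
    phiN y / 800 ≤ margDens τ y := by
  rcases le_total 0 y with hy | hy
  · have := marg_lower hτ y (a := τ) (b := 2 * τ) (k := phiN y / (800 * τ)) (by linarith) (by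
      intro θ hθ
      have h0 : 0 < θ := hτ.trans_le hθ.1
      exact postDens_near hτ hτ2 (by positivity) (by rw [abs_of_pos h0]; exact hθ.1)
        (by rw [abs_of_pos h0]; exact hθ.2))
    refine le_trans (le_of_eq ?_) this
    field_simp; ring
  · have := marg_lower hτ y (a := -(2 * τ)) (b := -τ) (k := phiN y / (800 * τ)) (by linarith) (by
      intro θ hθ
      have h0 : θ < 0 := by linarith [hθ.2]
      exact postDens_near hτ hτ2 (mul_nonneg_of_nonpos_of_nonpos hy h0.le)
        (by rw [abs_of_neg h0]; linarith [hθ.2])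
        (by rw [abs_of_neg h0]; linarith [hθ.1]))
    refine le_trans (le_of_eq ?_) this
    field_simp; ring

lemma marg_pos {τ : ℝ} (hτ : 0 < τ) (hτ2 : τ ≤ 1/2) (y : ℝ) : 0 < margDens τ y :=
  lt_of_lt_of_le (by have := phiN_pos y; positivity) (marg_ge_phi hτ hτ2 y)

lemma marg_ge_tau {τ : ℝ} (hτ : 0 < τ) (hτ2 : τ ≤ 1/2) (y : ℝ) :
    τ / (2000 * (|y| + 2) ^ 2) ≤ margDens τ y := by
  have key : ∀ θ, |y - θ| ≤ 2 → 1 ≤ |θ| → |θ| ≤ |y| + 2 →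
      τ / (2000 * (|y| + 2) ^ 2) ≤ postDens τ y θ := by
    intro θ h1 h2 h3
    have e1 : 1/20 ≤ phiN (y - θ) := phiN_two_ge.trans (phiN_anti (by
      rw [← sq_abs (y - θ)]; nlinarith [abs_nonneg (y - θ)]))
    have hθ0 : θ ≠ 0 := abs_pos.1 (by linarith)
    have e2 : τ / (100 * (|y| + 2) ^ 2) ≤ gHS τ θ := by
      refine le_trans ?_ (gHS_lower hτ (by linarith))
      rw [← sq_abs θ]
      gcongr
    calc τ / (2000 * (|y| + 2) ^ 2) = 1/20 * (τ / (100 * (|y| + 2) ^ 2)) := by field_simp; norm_num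
      _ ≤ postDens τ y θ := by unfold postDens; gcongr
  rcases le_total 0 y with hy | hy
  · have := marg_lower hτ y (a := y + 1) (b := y + 2) (k := τ / (2000 * (|y| + 2) ^ 2))
      (by linarith) (by
      intro θ hθ
      have h0 : 0 < θ := by linarith [hθ.1]
      refine key θ ?_ ?_ ?_
      · rw [abs_le]; constructor <;> linarith [hθ.1, hθ.2]
      · rw [abs_of_pos h0]; linarith [hθ.1]
      · rw [abs_of_pos h0, abs_of_nonneg hy]; linarith [hθ.2])
    refine le_trans (le_of_eq ?_) this
    ring
  · have := marg_lower hτ y (a := y - 2) (b := y - 1) (k := τ / (2000 * (|y| + 2) ^ 2))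
      (by linarith) (by
      intro θ hθ
      have h0 : θ < 0 := by linarith [hθ.2]
      refine key θ ?_ ?_ ?_
      · rw [abs_le]; constructor <;> linarith [hθ.1, hθ.2]
      · rw [abs_of_neg h0]; linarith [hθ.2]
      · rw [abs_of_neg h0, abs_of_nonpos hy]; linarith [hθ.1])
    refine le_trans (le_of_eq ?_) this
    ring

lemma mom1_int {τ : ℝ} (hτ : 0 < τ) (y : ℝ) : Integrable (fun θ => θ * postDens τ y θ) :=
  wint hτ y measurable_id 1 (by
    intro θ; change |θ| ≤ _; nlinarith [sq_nonneg (|θ| - 1), sq_abs θ, abs_nonneg θ])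

lemma mom2_int {τ : ℝ} (hτ : 0 < τ) (y : ℝ) : Integrable (fun θ => θ ^ 2 * postDens τ y θ) :=
  wint hτ y (by fun_prop) 1 (by
    intro θ; rw [abs_of_nonneg (sq_nonneg θ)]; linarith)

lemma mean_sq_le {τ : ℝ} (hτ : 0 < τ) (hτ2 : τ ≤ 1/2) (y : ℝ) :
    postMean τ y ^ 2 * phiN y ≤ 800 * τ := by
  have hψ := marg_pos hτ hτ2 y
  have h1 : ∫ θ, θ ^ 2 * postDens τ y θ ≤ τ := by
    have : ∫ θ, θ ^ 2 * postDens τ y θ ≤ ∫ θ, τ * phiN (y - θ) := by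
      refine integral_mono (mom2_int hτ y) ((phiN_sub_integrable y).const_mul τ) fun θ => ?_
      have hp := phiN_pos (y - θ)
      by_cases h : θ = 0
      · subst h; simp only [ne_eq, OfNat.ofNat_ne_zero, not_false_eq_true, zero_pow, zero_mul]; positivity
      · have h2 := gHS_upper hτ h
        have h3 : θ ^ 2 * gHS τ θ ≤ τ := by
          have : 0 < θ ^ 2 := by positivity
          rw [le_div_iff₀ this] at h2; linarith
        simp only [postDens]
        nlinarith
    rwa [integral_const_mul, phiN_sub_integral, mul_one] at this
  set m := postMean τ y with hm
  have hmψ : ∫ θ, θ * postDens τ y θ = m * margDens τ y := by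
    rw [hm, postMean]; field_simp
  have h2 : 0 ≤ ∫ θ, (θ - m) ^ 2 * postDens τ y θ :=
    integral_nonneg fun θ => mul_nonneg (sq_nonneg _) (postDens_nonneg hτ y θ)
  have h3 : ∫ θ, (θ - m) ^ 2 * postDens τ y θ
      = (∫ θ, θ ^ 2 * postDens τ y θ) - 2 * m * (∫ θ, θ * postDens τ y θ)
        + m ^ 2 * ∫ θ, postDens τ y θ := by
    rw [← integral_const_mul, ← integral_const_mul, ← integral_sub, ← integral_add]
    · congr 1; ext θ; ring
    · exact (mom2_int hτ y).sub ((mom1_int hτ y).const_mul _)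
    · exact (postDens_integrable hτ y).const_mul _
    · exact mom2_int hτ y
    · exact (mom1_int hτ y).const_mul _
  rw [hmψ] at h3
  change _ = _ - _ + m ^ 2 * margDens τ y at h3
  have h4 : m ^ 2 * margDens τ y ≤ τ := by nlinarith
  have h5 := marg_ge_phi hτ hτ2 y
  nlinarith [mul_le_mul_of_nonneg_left h5 (sq_nonneg m)]

lemma sqphi (y : ℝ) : Integrable (fun θ => (y - θ) ^ 2 * phiN (y - θ)) ∧
    ∫ θ, (y - θ) ^ 2 * phiN (y - θ) = 1 := by
  have h1 : Integrable (fun θ => (θ - y) ^ 2) (gaussianReal y 1) := by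
    have := (memLp_id_gaussianReal (μ := y) (v := 1) 2).sub (memLp_const y)
    exact this.integrable_sq
  have h2 : ∫ θ, (θ - y) ^ 2 ∂(gaussianReal y 1) = 1 := by
    have := variance_fun_id_gaussianReal (μ := y) (v := 1)
    rw [variance_eq_integral (by fun_prop)] at this
    simpa using this
  constructor
  · rw [gaussianReal_of_var_ne_zero _ one_ne_zero,
      integrable_withDensity_iff_integrable_smul' (by fun_prop)
        (Eventually.of_forall fun x => by simp [gaussianPDF])] at h1
    refine h1.congr (Eventually.of_forall fun θ => ?_)
    simp only [smul_eq_mul, toReal_gaussianPDF, phiN_eq_pdf']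
    ring
  · rw [integral_gaussianReal_eq_integral_smul one_ne_zero] at h2
    rw [← h2]
    congr 1; ext θ
    simp only [smul_eq_mul, phiN_eq_pdf']
    ring

lemma mean_dist {τ z : ℝ} (hτe : τ = Real.exp (-(z ^ 2) / 2)) (hz : 3 ≤ z) (hτ2 : τ ≤ 1/32)
    (y : ℝ) : |y - postMean τ y| ≤ 4 * z + 2000000 := by
  have hτ : 0 < τ := hτe ▸ Real.exp_pos _
  have hψ := marg_pos hτ (by linarith) y
  set R := τ / (|y| + 2) ^ 2 with hR
  have hy0 := abs_nonneg y
  have hR0 : 0 < R := by positivity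
  have hRψ : R ≤ 2000 * margDens τ y := by
    have := marg_ge_tau hτ (by linarith) y
    calc R = 2000 * (τ / (2000 * (|y| + 2) ^ 2)) := by rw [hR]; field_simp
      _ ≤ _ := by gcongr
  have hpt : ∀ θ, |y - θ| * postDens τ y θ ≤ 4 * z * postDens τ y θ + 288 * R * gHS τ θ
      + 288 * R * (phiN (y - θ) + (y - θ) ^ 2 * phiN (y - θ)) := by
    intro θ
    have hp := phiN_pos (y - θ)
    have hg := gHS_nonneg hτ θ
    have hd := postDens_nonneg hτ y θ
    set u := y - θ with hu
    have hT2 : 0 ≤ 288 * R * gHS τ θ := by positivity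
    have hT3 : 0 ≤ 288 * R * (phiN u + u ^ 2 * phiN u) := by positivity
    have hT1 : 0 ≤ 4 * z * postDens τ y θ := by positivity
    rcases le_or_gt |u| (4 * z) with h1 | h1
    · have : |u| * postDens τ y θ ≤ 4 * z * postDens τ y θ := by gcongr
      linarith
    rcases le_or_gt |y| (2 * |u|) with h2 | h2
    · have hu4 : 4 ≤ |u| := by linarith
      have hexp : Real.exp (-(u ^ 2) / 4) ≤ τ := by
        rw [hτe, Real.exp_le_exp, ← sq_abs u]; nlinarith
      have hx : u ^ 4 ≤ 32 * Real.exp (u ^ 2 / 4) := by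
        have := Real.quadratic_le_exp_of_nonneg (by positivity : 0 ≤ u ^ 2 / 4)
        nlinarith [sq_nonneg u]
      have hprod : Real.exp (u ^ 2 / 4) * Real.exp (-(u ^ 2) / 2) = Real.exp (-(u ^ 2) / 4) := by
        rw [← Real.exp_add]; ring_nf
      have h3 : |u| * (|y| + 2) ^ 2 ≤ 9 * u ^ 4 := by
        have e1 : |y| + 2 ≤ 3 * |u| := by linarith
        have e2 : (|y| + 2) ^ 2 ≤ (3 * |u|) ^ 2 := by gcongr
        have e3 : u ^ 4 = |u| ^ 4 := by rw [pow_abs, abs_of_nonneg (by positivity)]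
        calc |u| * (|y| + 2) ^ 2 ≤ |u| * (3 * |u|) ^ 2 := by gcongr
          _ = 9 * |u| ^ 3 * 1 := by ring
          _ ≤ 9 * |u| ^ 3 * |u| := by gcongr; linarith
          _ = 9 * u ^ 4 := by rw [e3]; ring
      have h4 : |u| * phiN u ≤ 288 * R := by
        rw [hR, mul_div_assoc', le_div_iff₀ (by positivity)]
        calc |u| * phiN u * (|y| + 2) ^ 2 = (|u| * (|y| + 2) ^ 2) * phiN u := by ring
          _ ≤ (9 * (32 * Real.exp (u ^ 2 / 4))) * Real.exp (-(u ^ 2) / 2) := by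
              refine mul_le_mul (by linarith) (phiN_le_exp u) hp.le (by positivity)
          _ = 288 * Real.exp (-(u ^ 2) / 4) := by rw [← hprod]; ring
          _ ≤ 288 * τ := by gcongr
      have : |u| * postDens τ y θ ≤ 288 * R * gHS τ θ := by
        unfold postDens; rw [← mul_assoc, ← hu]; gcongr
      linarith
    · have hθ : |y| / 2 ≤ |θ| := by
        have : |y| ≤ |u| + |θ| := by
          calc |y| = |u + θ| := by rw [hu]; ring_nf
            _ ≤ _ := abs_add_le _ _
        linarith
      have hy8 : 8 ≤ |y| := by linarith
      have hθ0 : θ ≠ 0 := abs_pos.1 (by linarith)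
      have h3 : gHS τ θ ≤ 288 * R := by
        refine (gHS_upper hτ hθ0).trans ?_
        rw [hR, mul_div_assoc', div_le_div_iff₀ (by positivity) (by positivity), ← sq_abs θ]
        have : (|y| + 2) ^ 2 ≤ 288 * |θ| ^ 2 := by
          have : |y| + 2 ≤ 3 * |θ| := by linarith
          nlinarith
        nlinarith
      have h4 : |u| ≤ 1 + u ^ 2 := by nlinarith [sq_nonneg (|u| - 1), sq_abs u, abs_nonneg u]
      have : |u| * postDens τ y θ ≤ 288 * R * (phiN u + u ^ 2 * phiN u) := by
        unfold postDens
        calc |u| * (phiN u * gHS τ θ) ≤ (1 + u ^ 2) * (phiN u * (288 * R)) := by gcongr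
          _ = _ := by ring
      linarith
  have hia : Integrable (fun θ => |y - θ| * postDens τ y θ) :=
    wint hτ y (by fun_prop) (1 + |y|) (by
      intro θ
      rw [abs_abs]
      have := abs_sub y θ
      nlinarith [sq_nonneg (|θ| - 1), sq_abs θ, abs_nonneg θ, mul_nonneg hy0 (sq_nonneg θ)])
  obtain ⟨hs1, hs2⟩ := sqphi y
  have hmain : ∫ θ, |y - θ| * postDens τ y θ ≤ 4 * z * margDens τ y + 288 * R * 1
      + 288 * R * (1 + 1) := by
    have hpi := phiN_sub_integrable y
    have i1 := (postDens_integrable hτ y).const_mul (4 * z)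
    have i2 := (gHS_integrable hτ).const_mul (288 * R)
    have i3 : Integrable (fun θ => 288 * R * (phiN (y - θ) + (y - θ) ^ 2 * phiN (y - θ))) :=
      (hpi.add hs1).const_mul (288 * R)
    have i12 : Integrable (fun θ => 4 * z * postDens τ y θ + 288 * R * gHS τ θ) := i1.add i2
    have := integral_mono hia (i12.add i3) hpt
    refine this.trans (le_of_eq ?_)
    simp only [Pi.add_apply]
    rw [integral_add i12 i3, integral_add i1 i2, integral_const_mul, integral_const_mul,
      integral_const_mul, gHS_integral hτ, integral_add hpi hs1, hs2, phiN_sub_integral]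
    rfl
  have hdiff : (y - postMean τ y) * margDens τ y = ∫ θ, (y - θ) * postDens τ y θ := by
    simp_rw [sub_mul]
    rw [integral_sub ((postDens_integrable hτ y).const_mul y) (mom1_int hτ y), integral_const_mul]
    congr 1
    rw [postMean]; field_simp
  have habs : |y - postMean τ y| * margDens τ y ≤ ∫ θ, |y - θ| * postDens τ y θ := by
    calc |y - postMean τ y| * margDens τ y = |(y - postMean τ y) * margDens τ y| := by
          rw [abs_mul, abs_of_pos hψ]
      _ ≤ ∫ θ, |(y - θ) * postDens τ y θ| := by rw [hdiff]; exact abs_integral_le_integral_abs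
      _ = _ := by
          congr 1; ext θ; rw [abs_mul, abs_of_nonneg (postDens_nonneg hτ y θ)]
  have : |y - postMean τ y| * margDens τ y ≤ (4 * z + 2000000) * margDens τ y := by nlinarith
  exact le_of_mul_le_mul_right this hψ


lemma marg_le {τ z : ℝ} (hτe : τ = Real.exp (-(z ^ 2) / 2)) (hz : 3 ≤ z)
    {y : ℝ} (hy : y ∈ Set.Icc (z / 4) (z / 2)) : margDens τ y ≤ 6 * phiN y := by
  have hτ : 0 < τ := hτe ▸ Real.exp_pos _
  have hy0 : 0 < y := by linarith [hy.1]
  have hφ := phiN_pos y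
  have hpt : ∀ θ, postDens τ y θ ≤ 3 * phiN y * gHS τ θ + τ * y ^ 2 * phiN (y - θ) := by
    intro θ
    have hp := phiN_pos (y - θ)
    have hg := gHS_nonneg hτ θ
    rcases le_or_gt (y * |θ|) 1 with h | h
    · have h1 : phiN (y - θ) ≤ 3 * phiN y := by
        have e : phiN (y - θ) = phiN y * Real.exp (y * θ - θ ^ 2 / 2) := by
          unfold phiN; rw [mul_assoc, ← Real.exp_add]; congr 2; ring
        have e2 : Real.exp (y * θ - θ ^ 2 / 2) ≤ Real.exp 1 := by
          rw [Real.exp_le_exp]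
          have : y * θ ≤ y * |θ| := by gcongr; exact le_abs_self θ
          nlinarith [sq_nonneg θ]
        rw [e]
        nlinarith [Real.exp_one_lt_d9]
      have : postDens τ y θ ≤ 3 * phiN y * gHS τ θ := by unfold postDens; gcongr
      have : 0 ≤ τ * y ^ 2 * phiN (y - θ) := by positivity
      linarith
    · have hθ0 : θ ≠ 0 := by rintro rfl; simp at h; linarith
      have h1 : gHS τ θ ≤ τ * y ^ 2 := by
        refine (gHS_upper hτ hθ0).trans ?_
        rw [div_le_iff₀ (by positivity)]
        have : 1 ≤ (y * |θ|) ^ 2 := by nlinarith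
        rw [mul_pow, sq_abs] at this
        nlinarith
      have : postDens τ y θ ≤ τ * y ^ 2 * phiN (y - θ) := by
        unfold postDens; rw [mul_comm]; gcongr
      have : 0 ≤ 3 * phiN y * gHS τ θ := by positivity
      linarith
  have i1 := (gHS_integrable hτ).const_mul (3 * phiN y)
  have i2 := (phiN_sub_integrable y).const_mul (τ * y ^ 2)
  have h1 : margDens τ y ≤ 3 * phiN y + τ * y ^ 2 := by
    have := integral_mono (postDens_integrable hτ y) (i1.add i2) hpt
    simp only [Pi.add_apply] at this
    rwa [integral_add i1 i2, integral_const_mul, integral_const_mul, gHS_integral hτ,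
      phiN_sub_integral, mul_one, mul_one] at this
  have h2 : τ * y ^ 2 ≤ Real.exp (-(y ^ 2) / 2) := by
    have e1 : y ^ 2 ≤ Real.exp (3 * z ^ 2 / 8) := by
      have := Real.add_one_le_exp (3 * z ^ 2 / 8)
      nlinarith [hy.2]
    calc τ * y ^ 2 ≤ Real.exp (-(z ^ 2) / 2) * Real.exp (3 * z ^ 2 / 8) := by
          rw [hτe]; gcongr
      _ ≤ Real.exp (-(y ^ 2) / 2) := by
          rw [← Real.exp_add, Real.exp_le_exp]; nlinarith [hy.2]
  have h3 := phiN_ge_exp y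
  have : Real.exp (-(y ^ 2) / 2) ≤ 2.6 * phiN y := by
    rw [div_le_iff₀ (by norm_num)] at h3; linarith
  linarith

lemma one_sub_exp_ge {x : ℝ} (hx : 0 ≤ x) : x / (1 + x) ≤ 1 - Real.exp (-x) := by
  have h := Real.add_one_le_exp x
  rw [Real.exp_neg]
  have : (Real.exp x)⁻¹ ≤ (1 + x)⁻¹ := inv_anti₀ (by linarith) (by linarith)
  have e : x / (1 + x) = 1 - (1 + x)⁻¹ := by field_simp; ring
  linarith

/-- weight -/
def wt (z m θ : ℝ) : ℝ := Real.exp (-((θ - m) ^ 2 / z ^ 2))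

lemma wt_pos (z m θ : ℝ) : 0 < wt z m θ := Real.exp_pos _
lemma wt_le (z m θ : ℝ) : wt z m θ ≤ 1 := Real.exp_le_one_iff.2 (by
  have : 0 ≤ (θ - m) ^ 2 / z ^ 2 := by positivity
  linarith)
lemma wt_meas (z m : ℝ) : Measurable (wt z m) := by unfold wt; fun_prop

lemma one_sub_wt_ge {z m θ c : ℝ} (hz : 0 < z) (hc : 0 ≤ c) (h : c * z ≤ |θ - m|) :
    c ^ 2 / (1 + c ^ 2) ≤ 1 - wt z m θ := by
  refine (one_sub_exp_ge (sq_nonneg c)).trans ?_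
  unfold wt
  have : c ^ 2 ≤ (θ - m) ^ 2 / z ^ 2 := by
    rw [le_div_iff₀ (by positivity), ← sq_abs (θ - m), ← mul_pow]
    gcongr
  have := Real.exp_le_exp.2 (neg_le_neg this)
  linarith

lemma D_lower {τ z : ℝ} (hτe : τ = Real.exp (-(z ^ 2) / 2)) (hz : 3 ≤ z) (hτ2 : τ ≤ 1/32)
    {y : ℝ} (hy : y ∈ Set.Icc (z / 4) (z / 2)) (m : ℝ) :
    τ / (1000000 * z ^ 2) ≤ ∫ θ, (1 - wt z m θ) * postDens τ y θ := by
  have hτ : 0 < τ := hτe ▸ Real.exp_pos _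
  have hz0 : 0 < z := by linarith
  have hy0 : 0 < y := by linarith [hy.1]
  have hw : Measurable (fun θ => 1 - wt z m θ) := (wt_meas z m).const_sub 1
  have hw0 : ∀ θ, 0 ≤ 1 - wt z m θ := fun θ => by linarith [wt_le z m θ]
  have hwK : ∀ θ, |1 - wt z m θ| ≤ 1 * (1 + θ ^ 2) := fun θ => by
    rw [abs_of_nonneg (hw0 θ)]; nlinarith [wt_pos z m θ, sq_nonneg θ]
  rcases le_or_gt m (z / 8) with hm | hm
  · have := postInt_lower hτ y hw 1 hwK hw0 (a := y) (b := y + 1)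
      (k := 1 / 65 * (1 / 5 * (τ / (100 * z ^ 2)))) (by linarith) (by
      intro θ hθ
      have e1 : 1 / 65 ≤ 1 - wt z m θ := by
        have := one_sub_wt_ge (z := z) (m := m) (θ := θ) (c := 1/8) hz0 (by norm_num)
          (by refine le_trans ?_ (le_abs_self _); linarith [hθ.1, hy.1])
        norm_num at this ⊢
        exact this
      have e2 : 1 / 5 ≤ phiN (y - θ) := phiN_one_ge.trans (phiN_anti (by nlinarith [hθ.1, hθ.2]))
      have hθ0 : 0 < θ := by linarith [hθ.1]
      have e3 : τ / (100 * z ^ 2) ≤ gHS τ θ := by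
        refine le_trans ?_ (gHS_lower hτ ?_)
        · gcongr; linarith [hθ.2, hy.2]
        · rw [abs_of_pos hθ0]; linarith [hθ.1, hy.1]
      have := phiN_pos (y - θ)
      unfold postDens
      gcongr)
    refine le_trans ?_ this
    have : 1 / 65 * (1 / 5 * (τ / (100 * z ^ 2))) * (y + 1 - y) = τ / (32500 * z ^ 2) := by
      field_simp; ring
    rw [this]; gcongr; norm_num
  · have hφ := phiN_pos y
    have := postInt_lower hτ y hw 1 hwK hw0 (a := τ) (b := 2 * τ)
      (k := 1 / 257 * (phiN y / (800 * τ))) (by linarith) (by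
      intro θ hθ
      have hθ0 : 0 < θ := by linarith [hθ.1]
      have e1 : 1 / 257 ≤ 1 - wt z m θ := by
        have := one_sub_wt_ge (z := z) (m := m) (θ := θ) (c := 1/16) hz0 (by norm_num)
          (by refine le_trans ?_ (neg_le_abs _); linarith [hθ.2])
        norm_num at this ⊢
        exact this
      have e2 := postDens_near hτ (by linarith) (y := y) (θ := θ) (by positivity)
        (by rw [abs_of_pos hθ0]; exact hθ.1) (by rw [abs_of_pos hθ0]; exact hθ.2)
      gcongr)
    refine le_trans ?_ this
    have e : 1 / 257 * (phiN y / (800 * τ)) * (2 * τ - τ) = phiN y / 205600 := by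
      field_simp; ring
    rw [e]
    have h3 := phiN_ge_exp y
    have h4 : τ ≤ Real.exp (-(y ^ 2) / 2) := by
      rw [hτe, Real.exp_le_exp]; nlinarith [hy.2]
    have h5 : τ / 2.6 ≤ phiN y := le_trans (by gcongr) h3
    calc τ / (1000000 * z ^ 2) ≤ τ / (1000000 * 1) := by
          gcongr; nlinarith
      _ ≤ (τ / 2.6) / 205600 := by
          rw [div_div, mul_one]; gcongr; norm_num
      _ ≤ _ := by gcongr

/-- posterior Laplace transform -/
def Fp (τ z y : ℝ) : ℝ := (∫ θ, wt z (postMean τ y) θ * postDens τ y θ) / margDens τ y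

/-- explicit upper bound for `Fp` -/
def Gf (τ z y : ℝ) : ℝ :=
  1 - (Set.Icc (z / 4) (z / 2)).indicator (fun y => τ / (6000000 * z ^ 2 * phiN y)) y

lemma wt_int {τ : ℝ} (hτ : 0 < τ) (z m y : ℝ) :
    Integrable (fun θ => wt z m θ * postDens τ y θ) :=
  wint hτ y (wt_meas z m) 1 (fun θ => by
    rw [abs_of_pos (wt_pos _ _ _)]; nlinarith [wt_le z m θ, sq_nonneg θ])

lemma Fp_nonneg {τ : ℝ} (hτ : 0 < τ) (hτ2 : τ ≤ 1/2) (z y : ℝ) : 0 ≤ Fp τ z y :=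
  div_nonneg (integral_nonneg fun θ => mul_nonneg (wt_pos _ _ _).le (postDens_nonneg hτ y θ))
    (marg_pos hτ hτ2 y).le

lemma Fp_eq {τ : ℝ} (hτ : 0 < τ) (hτ2 : τ ≤ 1/2) (z y : ℝ) :
    Fp τ z y = 1 - (∫ θ, (1 - wt z (postMean τ y) θ) * postDens τ y θ) / margDens τ y := by
  have hψ := marg_pos hτ hτ2 y
  have : ∫ θ, (1 - wt z (postMean τ y) θ) * postDens τ y θ
      = margDens τ y - ∫ θ, wt z (postMean τ y) θ * postDens τ y θ := by
    simp_rw [sub_mul, one_mul]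
    rw [integral_sub (postDens_integrable hτ y) (wt_int hτ _ _ _)]; rfl
  rw [this, Fp]; field_simp; ring

lemma Fp_le_one {τ : ℝ} (hτ : 0 < τ) (hτ2 : τ ≤ 1/2) (z y : ℝ) : Fp τ z y ≤ 1 := by
  rw [Fp_eq hτ hτ2]
  have : 0 ≤ (∫ θ, (1 - wt z (postMean τ y) θ) * postDens τ y θ) / margDens τ y :=
    div_nonneg (integral_nonneg fun θ => mul_nonneg (by
      rw [sub_nonneg]; exact wt_le _ _ _) (postDens_nonneg hτ y θ))
      (marg_pos hτ hτ2 y).le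
  linarith

lemma Fp_le {τ z : ℝ} (hτe : τ = Real.exp (-(z ^ 2) / 2)) (hz : 3 ≤ z) (hτ2 : τ ≤ 1/32)
    (y : ℝ) : Fp τ z y ≤ Gf τ z y := by
  have hτ : 0 < τ := hτe ▸ Real.exp_pos _
  unfold Gf
  by_cases hy : y ∈ Set.Icc (z / 4) (z / 2)
  · rw [Set.indicator_of_mem hy, Fp_eq hτ (by linarith)]
    have h1 := D_lower hτe hz hτ2 hy (postMean τ y)
    have h2 := marg_le hτe hz hy
    have hψ := marg_pos hτ (by linarith) y
    have hφ := phiN_pos y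
    have hz0 : 0 < z := by linarith
    have : τ / (6000000 * z ^ 2 * phiN y) ≤
        (∫ θ, (1 - wt z (postMean τ y) θ) * postDens τ y θ) / margDens τ y := by
      calc τ / (6000000 * z ^ 2 * phiN y) = τ / (1000000 * z ^ 2) / (6 * phiN y) := by
            field_simp; norm_num
        _ ≤ τ / (1000000 * z ^ 2) / margDens τ y := by gcongr
        _ ≤ _ := by gcongr
    linarith
  · rw [Set.indicator_of_notMem hy, sub_zero]; exact Fp_le_one hτ (by linarith) z y

lemma Gf_nonneg {τ z : ℝ} (hτe : τ = Real.exp (-(z ^ 2) / 2)) (hz : 3 ≤ z) (hτ2 : τ ≤ 1/32)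
    (y : ℝ) : 0 ≤ Gf τ z y :=
  (Fp_nonneg (hτe ▸ Real.exp_pos _) (by linarith) z y).trans (Fp_le hτe hz hτ2 y)

lemma Gf_le {τ : ℝ} (hτ : 0 < τ) (z y : ℝ) : Gf τ z y ≤ 1 := by
  unfold Gf
  have : 0 ≤ (Set.Icc (z / 4) (z / 2)).indicator (fun y => τ / (6000000 * z ^ 2 * phiN y)) y :=
    Set.indicator_nonneg (fun y _ => by have := phiN_pos y; positivity) y
  linarith

lemma Gf_meas (τ z : ℝ) : Measurable (Gf τ z) := by
  have := phiN_cont.measurable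
  unfold Gf
  exact Measurable.const_sub (Measurable.indicator (by fun_prop) measurableSet_Icc) 1

lemma Gf_integral {τ z : ℝ} (hτe : τ = Real.exp (-(z ^ 2) / 2)) (hz : 3 ≤ z) (hτ2 : τ ≤ 1/32) :
    ∫ y, Gf τ z y ∂(gaussianReal 0 1) = 1 - τ / (24000000 * z) := by
  have hτ : 0 < τ := hτe ▸ Real.exp_pos _
  have hGi : Integrable (Gf τ z) (gaussianReal 0 1) := by
    refine Integrable.of_bound (Gf_meas τ z).aestronglyMeasurable 1 (Eventually.of_forall fun y => ?_)
    rw [Real.norm_of_nonneg (Gf_nonneg hτe hz hτ2 y)]; exact Gf_le hτ z y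
  set f := (Set.Icc (z / 4) (z / 2)).indicator (fun y => τ / (6000000 * z ^ 2 * phiN y)) with hf
  have hfe : f = fun y => 1 - Gf τ z y := by ext y; simp [Gf, hf]
  have hfi : Integrable f (gaussianReal 0 1) := by
    rw [hfe]; exact (integrable_const 1).sub hGi
  have h1 : ∫ y, Gf τ z y ∂(gaussianReal 0 1) = 1 - ∫ y, f y ∂(gaussianReal 0 1) := by
    have : (fun y => Gf τ z y) = fun y => 1 - f y := by ext y; simp [Gf, hf]
    rw [this, integral_sub (integrable_const 1) hfi]; simp
  rw [h1, integral_gaussianReal_eq_integral_smul one_ne_zero]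
  have h2 : (fun y => gaussianPDFReal 0 1 y • f y)
      = (Set.Icc (z / 4) (z / 2)).indicator (fun _ => τ / (6000000 * z ^ 2)) := by
    ext y
    by_cases hy : y ∈ Set.Icc (z / 4) (z / 2)
    · simp only [hf, Set.indicator_of_mem hy, ← phiN_eq_pdf, sub_zero, smul_eq_mul]
      have := (phiN_pos y).ne'
      field_simp
    · simp [hf, Set.indicator_of_notMem hy]
  rw [h2, integral_indicator measurableSet_Icc, setIntegral_const, Measure.real, Real.volume_Icc,
    ENNReal.toReal_ofReal (by linarith), smul_eq_mul]
  field_simp; ring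


lemma postMean_meas (τ : ℝ) : Measurable (postMean τ) := by
  have hp := phiN_cont.measurable
  have hg := gHS_meas τ
  have h1 : Measurable (fun q : ℝ × ℝ => postDens τ q.1 q.2) := by unfold postDens; fun_prop
  have h2 : Measurable (fun q : ℝ × ℝ => q.2 * postDens τ q.1 q.2) := by fun_prop
  have e1 : Measurable (fun y => ∫ θ, postDens τ y θ) :=
    (StronglyMeasurable.integral_prod_right h1.stronglyMeasurable).measurable
  have e2 : Measurable (fun y => ∫ θ, θ * postDens τ y θ) :=
    (StronglyMeasurable.integral_prod_right h2.stronglyMeasurable).measurable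
  exact e2.div e1

lemma mean_dist' {τ z : ℝ} (hτe : τ = Real.exp (-(z ^ 2) / 2)) (hz : 3 ≤ z) (hτ2 : τ ≤ 1/32)
    (y : ℝ) : (y - postMean τ y) ^ 2 ≤ 1000000000000 * z ^ 2 := by
  have h := mean_dist hτe hz hτ2 y
  have h2 : |y - postMean τ y| ≤ 1000000 * z := by linarith
  rw [← sq_abs]
  nlinarith [abs_nonneg (y - postMean τ y)]

lemma risk_nonzero {τ z : ℝ} (hτe : τ = Real.exp (-(z ^ 2) / 2)) (hz : 3 ≤ z) (hτ2 : τ ≤ 1/32)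
    (t : ℝ) : ∫⁻ y, ENNReal.ofReal ((t - postMean τ y) ^ 2) ∂(gaussianReal t 1)
      ≤ ENNReal.ofReal (100000000000000 * z ^ 2) := by
  have h1 : Integrable (fun y => (y - t) ^ 2) (gaussianReal t 1) := by
    have := (memLp_id_gaussianReal (μ := t) (v := 1) 2).sub (memLp_const t)
    exact this.integrable_sq
  have h2 : ∫ y, (y - t) ^ 2 ∂(gaussianReal t 1) = 1 := by
    have := variance_fun_id_gaussianReal (μ := t) (v := 1)
    rw [variance_eq_integral (by fun_prop)] at this
    simpa using this
  have h3 : Integrable (fun y => 2 * (y - t) ^ 2 + 2 * (1000000000000 * z ^ 2))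
      (gaussianReal t 1) := (h1.const_mul 2).add (integrable_const _)
  calc ∫⁻ y, ENNReal.ofReal ((t - postMean τ y) ^ 2) ∂(gaussianReal t 1)
      ≤ ∫⁻ y, ENNReal.ofReal (2 * (y - t) ^ 2 + 2 * (1000000000000 * z ^ 2))
          ∂(gaussianReal t 1) := by
        refine lintegral_mono fun y => ENNReal.ofReal_le_ofReal ?_
        have := mean_dist' hτe hz hτ2 y
        nlinarith [sq_nonneg ((y - t) + (y - postMean τ y))]
    _ = ENNReal.ofReal (∫ y, (2 * (y - t) ^ 2 + 2 * (1000000000000 * z ^ 2))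
          ∂(gaussianReal t 1)) := by
        rw [ofReal_integral_eq_lintegral_ofReal h3]
        exact Eventually.of_forall fun y => by positivity
    _ ≤ _ := by
        refine ENNReal.ofReal_le_ofReal ?_
        rw [integral_add (h1.const_mul 2) (integrable_const _), integral_const_mul, h2]
        simp
        nlinarith

/-- tail function -/
def qf (y : ℝ) : ℝ := (y ^ 2 - 1) * Real.exp (-(y ^ 2) / 2)

lemma qf_tail {z : ℝ} (hz : 3 ≤ z) : IntegrableOn qf (Set.Ioi z) ∧
    ∫ y in Set.Ioi z, qf y = z * Real.exp (-(z ^ 2) / 2) := by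
  have hder : ∀ x ∈ Set.Ici z, HasDerivAt (fun y : ℝ => -(y * Real.exp (-(y ^ 2) / 2))) (qf x) x := by
    intro x _
    have h1 : HasDerivAt (fun y : ℝ => -(y ^ 2) / 2) (-x) x := by
      have : HasDerivAt (fun y : ℝ => -(y ^ 2) / 2) (-(((2 : ℕ) : ℝ) * x ^ (2 - 1)) / 2) x :=
        ((hasDerivAt_pow 2 x).neg).div_const 2
      convert this using 1
      simp only [Nat.cast_ofNat]; ring
    have h2 : HasDerivAt (fun y : ℝ => -(y * Real.exp (-(y ^ 2) / 2)))
        (-(1 * Real.exp (-(x ^ 2) / 2) + x * (Real.exp (-(x ^ 2) / 2) * (-x)))) x :=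
      ((hasDerivAt_id x).mul h1.exp).neg
    convert h2 using 1
    simp only [qf]; ring
  have hpos : ∀ x ∈ Set.Ioi z, 0 ≤ qf x := by
    intro x hx
    have hx : z < x := hx
    have : 0 ≤ x ^ 2 - 1 := by nlinarith
    unfold qf; positivity
  have hlim : Tendsto (fun y : ℝ => -(y * Real.exp (-(y ^ 2) / 2))) atTop (nhds 0) := by
    have h := Real.tendsto_pow_mul_exp_neg_atTop_nhds_zero 1
    have h' : Tendsto (fun y : ℝ => y * Real.exp (-(y ^ 2) / 2)) atTop (nhds 0) := by
      refine squeeze_zero' ?_ ?_ h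
      · filter_upwards [eventually_ge_atTop 0] with y hy
        positivity
      · filter_upwards [eventually_ge_atTop 2] with y hy
        rw [pow_one]
        gcongr
        nlinarith
    simpa using h'.neg
  refine ⟨integrableOn_Ioi_deriv_of_nonneg' hder hpos hlim, ?_⟩
  rw [integral_Ioi_of_hasDerivAt_of_nonneg' hder hpos hlim]
  simp

lemma qf_tail' {z : ℝ} (hz : 3 ≤ z) : IntegrableOn qf (Set.Iic (-z)) ∧
    ∫ y in Set.Iic (-z), qf y = z * Real.exp (-(z ^ 2) / 2) := by
  obtain ⟨h1, h2⟩ := qf_tail hz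
  have he : ∀ y, qf (-y) = qf y := fun y => by simp [qf]
  constructor
  · rw [integrableOn_Iic_iff_integrableOn_Iio]
    have := IntegrableOn.comp_neg_Iio (c := -z) (f := qf) (by rwa [neg_neg])
    simpa only [he] using this
  · have := integral_comp_neg_Iic (-z) qf
    simp only [he, neg_neg] at this
    rw [this, h2]

lemma risk_zero {τ z : ℝ} (hτe : τ = Real.exp (-(z ^ 2) / 2)) (hz : 3 ≤ z) (hτ2 : τ ≤ 1/32) :
    ∫⁻ y, ENNReal.ofReal ((0 - postMean τ y) ^ 2) ∂(gaussianReal 0 1)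
      ≤ ENNReal.ofReal (100000000000000 * τ * z) := by
  have hτ : 0 < τ := hτe ▸ Real.exp_pos _
  have hm := postMean_meas τ
  obtain ⟨q1, q2⟩ := qf_tail hz
  obtain ⟨q3, q4⟩ := qf_tail' hz
  set A : ℝ → ℝ := (Set.Icc (-z) z).indicator (fun _ => 800 * τ) with hA
  set B : ℝ → ℝ := (Set.Ioi z).indicator (fun y => 6000000000000 * qf y) with hB
  set C : ℝ → ℝ := (Set.Iic (-z)).indicator (fun y => 6000000000000 * qf y) with hC
  have iA : Integrable A := (integrable_indicator_iff measurableSet_Icc).2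
    (integrableOn_const (by simp))
  have iB : Integrable B := (integrable_indicator_iff measurableSet_Ioi).2 (q1.const_mul _)
  have iC : Integrable C := (integrable_indicator_iff measurableSet_Iic).2 (q3.const_mul _)
  have hq : ∀ y, z ≤ |y| → 0 ≤ qf y := by
    intro y hy
    have : 0 ≤ y ^ 2 - 1 := by rw [← sq_abs]; nlinarith
    unfold qf; positivity
  have A0 : ∀ y, 0 ≤ A y := fun y => Set.indicator_nonneg (fun _ _ => by positivity) y
  have B0 : ∀ y, 0 ≤ B y := fun y => Set.indicator_nonneg (fun y hy => by
    have hy : z < y := hy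
    have := hq y (hy.le.trans (le_abs_self y)); positivity) y
  have C0 : ∀ y, 0 ≤ C y := fun y => Set.indicator_nonneg (fun y hy => by
    have hy : y ≤ -z := hy
    have := hq y (le_trans (by linarith) (neg_le_abs y)); positivity) y
  have hpt : ∀ y, phiN y * (0 - postMean τ y) ^ 2 ≤ A y + B y + C y := by
    intro y
    have tail : z ≤ |y| → phiN y * (0 - postMean τ y) ^ 2 ≤ 6000000000000 * qf y := by
      intro hy
      have hd := mean_dist' hτe hz hτ2 y
      have hy2 : z ^ 2 ≤ y ^ 2 := by rw [← sq_abs y]; gcongr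
      have h1 : (0 - postMean τ y) ^ 2 ≤ 3000000000000 * y ^ 2 := by
        nlinarith [sq_nonneg (y + (y - postMean τ y))]
      have h2 : (0 - postMean τ y) ^ 2 ≤ 6000000000000 * (y ^ 2 - 1) := by nlinarith
      calc phiN y * (0 - postMean τ y) ^ 2
          ≤ Real.exp (-(y ^ 2) / 2) * (6000000000000 * (y ^ 2 - 1)) := by
            gcongr
            exact phiN_le_exp y
        _ = _ := by unfold qf; ring
    by_cases h1 : y ∈ Set.Icc (-z) z
    · have : A y = 800 * τ := by simp only [hA, Set.indicator_of_mem h1]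
      have h2 := mean_sq_le hτ (by linarith) y
      have h3 : phiN y * (0 - postMean τ y) ^ 2 = postMean τ y ^ 2 * phiN y := by ring
      linarith [B0 y, C0 y]
    · by_cases h2 : z < y
      · have h2' : y ∈ Set.Ioi z := h2
        have : B y = 6000000000000 * qf y := by simp only [hB, Set.indicator_of_mem h2']
        linarith [A0 y, C0 y, tail (h2.le.trans (le_abs_self y))]
      · have h3 : y ≤ -z := by
          by_contra h
          exact h1 ⟨by linarith, by linarith⟩
        have h3' : y ∈ Set.Iic (-z) := h3
        have : C y = 6000000000000 * qf y := by simp only [hC, Set.indicator_of_mem h3']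
        linarith [A0 y, B0 y, tail (le_trans (by linarith) (neg_le_abs y))]
  rw [gaussianReal_of_var_ne_zero _ one_ne_zero,
    lintegral_withDensity_eq_lintegral_mul _ (by fun_prop) (by fun_prop)]
  calc ∫⁻ y, (gaussianPDF 0 1 * fun y => ENNReal.ofReal ((0 - postMean τ y) ^ 2)) y
      ≤ ∫⁻ y, ENNReal.ofReal (A y + B y + C y) := by
        refine lintegral_mono fun y => ?_
        rw [Pi.mul_apply, gaussianPDF, ← phiN_eq_pdf, sub_zero,
          ← ENNReal.ofReal_mul (phiN_pos y).le]
        exact ENNReal.ofReal_le_ofReal (hpt y)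
    _ = ENNReal.ofReal (∫ y, (A y + B y + C y)) := by
        have iABC : Integrable (fun y => A y + B y + C y) := (iA.add iB).add iC
        rw [ofReal_integral_eq_lintegral_ofReal iABC]
        · exact Eventually.of_forall fun y => add_nonneg (add_nonneg (A0 y) (B0 y)) (C0 y)
    _ ≤ _ := by
        refine ENNReal.ofReal_le_ofReal ?_
        have iAB : Integrable (fun y => A y + B y) := iA.add iB
        rw [integral_add iAB iC, integral_add iA iB, hA, hB, hC,
          integral_indicator measurableSet_Icc, integral_indicator measurableSet_Ioi,
          integral_indicator measurableSet_Iic, setIntegral_const, integral_const_mul,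
          integral_const_mul, q2, q4, Measure.real, Real.volume_Icc,
          ENNReal.toReal_ofReal (by linarith), smul_eq_mul, ← hτe]
        nlinarith [mul_pos hτ (by linarith : 0 < z)]


lemma l2dist_meas {n : ℕ} (m : Fin n → ℝ) : Measurable (fun θ : Fin n → ℝ => l2dist θ m) := by
  unfold l2dist; fun_prop

lemma fullPost_le {n : ℕ} {τ : ℝ} (hτ : 0 < τ) (hτ2 : τ ≤ 1/2) (z r : ℝ)
    (y : Fin n → ℝ) :
    fullPostProb τ y {θ | l2dist θ (fullPostMean τ y) ≤ r} ≤
      Real.exp (r ^ 2 / z ^ 2) * ∏ i, Fp τ z (y i) := by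
  have hden : ∫ θ : Fin n → ℝ, fullDens τ y θ = ∏ i, margDens τ (y i) := by
    unfold fullDens
    exact integral_fintype_prod_volume_eq_prod (fun i θ => postDens τ (y i) θ)
  have hdpos : 0 < ∏ i, margDens τ (y i) := Finset.prod_pos fun i _ => marg_pos hτ hτ2 (y i)
  have hfi : Integrable (fun θ : Fin n → ℝ => fullDens τ y θ) := by
    unfold fullDens
    exact Integrable.fintype_prod (f := fun i θ => postDens τ (y i) θ)
      fun i => postDens_integrable hτ (y i)
  set W : (Fin n → ℝ) → ℝ := fun θ => ∏ i, (wt z (postMean τ (y i)) (θ i) * postDens τ (y i) (θ i))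
    with hW
  have hWi : Integrable W :=
    Integrable.fintype_prod (f := fun i θ => wt z (postMean τ (y i)) θ * postDens τ (y i) θ)
      fun i => wt_int hτ z _ (y i)
  have hWint : ∫ θ, W θ = ∏ i, ∫ t, wt z (postMean τ (y i)) t * postDens τ (y i) t :=
    integral_fintype_prod_volume_eq_prod
      (fun i θ => wt z (postMean τ (y i)) θ * postDens τ (y i) θ)
  have hW0 : ∀ θ, 0 ≤ W θ := fun θ => Finset.prod_nonneg fun i _ =>
    mul_nonneg (wt_pos _ _ _).le (postDens_nonneg hτ _ _)
  have hA : MeasurableSet {θ : Fin n → ℝ | l2dist θ (fullPostMean τ y) ≤ r} :=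
    measurableSet_le (l2dist_meas _) measurable_const
  have hle : ∀ θ ∈ {θ : Fin n → ℝ | l2dist θ (fullPostMean τ y) ≤ r},
      fullDens τ y θ ≤ Real.exp (r ^ 2 / z ^ 2) * W θ := by
    intro θ hθ
    have hθ : l2dist θ (fullPostMean τ y) ≤ r := hθ
    have hs : ∑ i, (θ i - postMean τ (y i)) ^ 2 ≤ r ^ 2 := by
      have h0 : 0 ≤ ∑ i, (θ i - postMean τ (y i)) ^ 2 :=
        Finset.sum_nonneg fun i _ => sq_nonneg _
      unfold l2dist fullPostMean at hθ
      rw [← Real.sq_sqrt h0]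
      gcongr
    have hWe : W θ = Real.exp (-((∑ i, (θ i - postMean τ (y i)) ^ 2) / z ^ 2)) * fullDens τ y θ := by
      simp only [hW, Finset.prod_mul_distrib, fullDens, wt]
      rw [← Real.exp_sum, Finset.sum_neg_distrib, Finset.sum_div]
    have hf0 : 0 ≤ fullDens τ y θ := Finset.prod_nonneg fun i _ => postDens_nonneg hτ _ _
    rw [hWe, ← mul_assoc, ← Real.exp_add]
    refine le_mul_of_one_le_left hf0 (Real.one_le_exp ?_)
    have : (∑ i, (θ i - postMean τ (y i)) ^ 2) / z ^ 2 ≤ r ^ 2 / z ^ 2 := by gcongr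
    linarith
  have hnum : ∫ θ in {θ : Fin n → ℝ | l2dist θ (fullPostMean τ y) ≤ r}, fullDens τ y θ
      ≤ Real.exp (r ^ 2 / z ^ 2) * ∫ θ, W θ := by
    calc _ ≤ ∫ θ in {θ : Fin n → ℝ | l2dist θ (fullPostMean τ y) ≤ r},
          Real.exp (r ^ 2 / z ^ 2) * W θ :=
          setIntegral_mono_on hfi.integrableOn (hWi.const_mul _).integrableOn hA hle
      _ ≤ ∫ θ, Real.exp (r ^ 2 / z ^ 2) * W θ :=
          setIntegral_le_integral (hWi.const_mul _)
            (Eventually.of_forall fun θ => mul_nonneg (Real.exp_pos _).le (hW0 θ))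
      _ = _ := by rw [integral_const_mul]
  unfold fullPostProb
  rw [hden]
  calc _ ≤ Real.exp (r ^ 2 / z ^ 2) * (∫ θ, W θ) / ∏ i, margDens τ (y i) := by gcongr
    _ = _ := by
      rw [hWint, mul_div_assoc, ← Finset.prod_div_distrib]; rfl

instance {n : ℕ} (θ₀ : Fin n → ℝ) : IsProbabilityMeasure (Pdata θ₀) := by
  unfold Pdata; infer_instance

open Classical in
lemma bad2 {n : ℕ} {τ z : ℝ} (hτe : τ = Real.exp (-(z ^ 2) / 2)) (hz : 3 ≤ z)
    (hτ2 : τ ≤ 1/32) {α : ℝ} (hα : α ∈ Set.Ioo (0:ℝ) 1) (r : (Fin n → ℝ) → ℝ)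
    (hr : ∀ y, fullPostProb τ y {θ | l2dist θ (fullPostMean τ y) ≤ r y} = 1 - α)
    (θ₀ : Fin n → ℝ) (s : ℝ) :
    Pdata θ₀ {y | r y ^ 2 ≤ s} ≤ ENNReal.ofReal (Real.exp (s / z ^ 2) *
      Real.exp (-(τ / (24000000 * z)) * (({i | θ₀ i = 0} : Finset (Fin n)).card : ℝ)) / (1 - α)) := by
  have hτ : 0 < τ := hτe ▸ Real.exp_pos _
  have hα1 : 0 < 1 - α := by linarith [hα.2]
  set H : Fin n → ℝ → ℝ := fun i t => if θ₀ i = 0 then Gf τ z t else 1 with hH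
  have hH0 : ∀ i t, 0 ≤ H i t := by
    intro i t; simp only [hH]; split_ifs
    · exact Gf_nonneg hτe hz hτ2 t
    · exact zero_le_one
  have hH1 : ∀ i t, H i t ≤ 1 := by
    intro i t; simp only [hH]; split_ifs
    · exact Gf_le hτ z t
    · exact le_rfl
  have hHm : ∀ i, Measurable (H i) := by
    intro i; simp only [hH]; split_ifs
    · exact Gf_meas τ z
    · exact measurable_const
  have hFH : ∀ i t, Fp τ z t ≤ H i t := by
    intro i t; simp only [hH]; split_ifs
    · exact Fp_le hτe hz hτ2 t
    · exact Fp_le_one hτ (by linarith) z t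
  set f : (Fin n → ℝ) → ℝ := fun y => Real.exp (s / z ^ 2) * ∏ i, H i (y i) with hf
  have hsub : {y | r y ^ 2 ≤ s} ⊆ {y | 1 - α ≤ f y} := by
    intro y hy
    have hy : r y ^ 2 ≤ s := hy
    have h1 := fullPost_le hτ (by linarith : τ ≤ 1/2) z (r y) y
    rw [hr y] at h1
    refine h1.trans ?_
    simp only [hf]
    have : ∏ i, Fp τ z (y i) ≤ ∏ i, H i (y i) :=
      Finset.prod_le_prod (fun i _ => Fp_nonneg hτ (by linarith) z _) fun i _ => hFH i _
    have h0 : 0 ≤ ∏ i, Fp τ z (y i) := Finset.prod_nonneg fun i _ => Fp_nonneg hτ (by linarith) z _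
    gcongr
  have hfi : Integrable f (Pdata θ₀) := by
    refine Integrable.const_mul ?_ _
    exact Integrable.fintype_prod (f := H) fun i =>
      Integrable.of_bound (hHm i).aestronglyMeasurable 1 (Eventually.of_forall fun t => by
        rw [Real.norm_of_nonneg (hH0 i t)]; exact hH1 i t)
  have hfint : ∫ y, f y ∂(Pdata θ₀) ≤ Real.exp (s / z ^ 2) *
      Real.exp (-(τ / (24000000 * z)) * (({i | θ₀ i = 0} : Finset (Fin n)).card : ℝ)) := by
    have e1 : ∫ y, f y ∂(Pdata θ₀) = Real.exp (s / z ^ 2) *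
        ∏ i, ∫ t, H i t ∂(gaussianReal (θ₀ i) 1) := by
      simp only [hf]
      rw [integral_const_mul]
      congr 1
      exact integral_fintype_prod_eq_prod H
    rw [e1]
    gcongr
    calc ∏ i, ∫ t, H i t ∂(gaussianReal (θ₀ i) 1)
        ≤ ∏ i, (if θ₀ i = 0 then Real.exp (-(τ / (24000000 * z))) else 1) := by
          refine Finset.prod_le_prod (fun i _ => integral_nonneg fun t => hH0 i t) fun i _ => ?_
          by_cases h : θ₀ i = 0
          · simp only [hH, h, if_true]
            rw [Gf_integral hτe hz hτ2]
            have := Real.add_one_le_exp (-(τ / (24000000 * z)))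
            linarith
          · simp [hH, h]
      _ = _ := by
          rw [Finset.prod_ite, Finset.prod_const, Finset.prod_const_one, mul_one, ← Real.exp_nat_mul,
            mul_comm]
  have hM := mul_meas_ge_le_integral_of_nonneg (μ := Pdata θ₀) (f := f)
    (Eventually.of_forall fun y => mul_nonneg (Real.exp_pos _).le
      (Finset.prod_nonneg fun i _ => hH0 i _)) hfi (1 - α)
  refine (measure_mono hsub).trans ?_
  rw [← ofReal_measureReal]
  refine ENNReal.ofReal_le_ofReal ?_
  rw [le_div_iff₀ hα1]
  linarith

open Classical in
lemma bad1 {n : ℕ} {τ z : ℝ} (hτe : τ = Real.exp (-(z ^ 2) / 2)) (hz : 3 ≤ z)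
    (hτ2 : τ ≤ 1/32) (θ₀ : Fin n → ℝ) (p : ℕ) (hθ : θ₀ ∈ nearlyBlack n p) {s : ℝ} (hs : 0 < s) :
    Pdata θ₀ {y | s ≤ ∑ i, (θ₀ i - postMean τ (y i)) ^ 2} ≤
      ENNReal.ofReal (100000000000000 * (p * z ^ 2 + n * (τ * z)) / s) := by
  have hτ : 0 < τ := hτe ▸ Real.exp_pos _
  have hz0 : 0 < z := by linarith
  have hm := postMean_meas τ
  have hIntegr : ∫⁻ y, ENNReal.ofReal (∑ i, (θ₀ i - postMean τ (y i)) ^ 2) ∂(Pdata θ₀)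
      ≤ ENNReal.ofReal (100000000000000 * (p * z ^ 2 + n * (τ * z))) := by
    calc ∫⁻ y, ENNReal.ofReal (∑ i, (θ₀ i - postMean τ (y i)) ^ 2) ∂(Pdata θ₀)
        = ∫⁻ y, ∑ i, ENNReal.ofReal ((θ₀ i - postMean τ (y i)) ^ 2) ∂(Pdata θ₀) := by
          congr 1; ext y; rw [ENNReal.ofReal_sum_of_nonneg fun i _ => sq_nonneg _]
      _ = ∑ i, ∫⁻ y, ENNReal.ofReal ((θ₀ i - postMean τ (y i)) ^ 2) ∂(Pdata θ₀) :=
          lintegral_finsetSum _ fun i _ => by fun_prop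
      _ = ∑ i, ∫⁻ t, ENNReal.ofReal ((θ₀ i - postMean τ t) ^ 2) ∂(gaussianReal (θ₀ i) 1) := by
          refine Finset.sum_congr rfl fun i _ => ?_
          exact (measurePreserving_eval (fun i => gaussianReal (θ₀ i) 1) i).lintegral_comp
            (f := fun t => ENNReal.ofReal ((θ₀ i - postMean τ t) ^ 2)) (by fun_prop)
      _ ≤ ∑ i, ENNReal.ofReal (100000000000000 * ((if θ₀ i ≠ 0 then z ^ 2 else 0) + τ * z)) := by
          refine Finset.sum_le_sum fun i _ => ?_
          by_cases h : θ₀ i = 0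
          · rw [h]
            refine (risk_zero hτe hz hτ2).trans (ENNReal.ofReal_le_ofReal ?_)
            simp; linarith
          · refine (risk_nonzero hτe hz hτ2 (θ₀ i)).trans (ENNReal.ofReal_le_ofReal ?_)
            simp [h]; positivity
      _ = ENNReal.ofReal (∑ i, 100000000000000 * ((if θ₀ i ≠ 0 then z ^ 2 else 0) + τ * z)) := by
          rw [ENNReal.ofReal_sum_of_nonneg]
          intro i _
          split_ifs <;> positivity
      _ ≤ _ := by
          refine ENNReal.ofReal_le_ofReal ?_
          rw [← Finset.mul_sum, Finset.sum_add_distrib, Finset.sum_const, Finset.card_univ,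
            Fintype.card_fin, nsmul_eq_mul, ← Finset.sum_filter, Finset.sum_const, nsmul_eq_mul]
          have hc : (({i | θ₀ i ≠ 0} : Finset (Fin n)).card : ℝ) ≤ p := by
            have h : ({i | θ₀ i ≠ 0} : Set (Fin n)).ncard ≤ p := hθ
            rw [Set.ncard_eq_toFinset_card', Set.toFinset_ofPred] at h
            exact_mod_cast h
          gcongr
  have hmeas : Measurable (fun y : Fin n → ℝ =>
      ENNReal.ofReal (∑ i, (θ₀ i - postMean τ (y i)) ^ 2)) := by fun_prop
  have hM := meas_ge_le_lintegral_div (μ := Pdata θ₀) hmeas.aemeasurable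
    (ε := ENNReal.ofReal s) (by simpa using hs) ENNReal.ofReal_ne_top
  rw [ENNReal.ofReal_div_of_pos hs]
  refine le_trans (measure_mono ?_) (hM.trans (by gcongr))
  intro y hy
  exact ENNReal.ofReal_le_ofReal hy


open Classical in
lemma core {n : ℕ} {τ z : ℝ} (hτe : τ = Real.exp (-(z ^ 2) / 2)) (hz : 3 ≤ z) (hτ2 : τ ≤ 1/32)
    {α : ℝ} (hα : α ∈ Set.Ioo (0 : ℝ) 1) (r : (Fin n → ℝ) → ℝ)
    (hr : ∀ y, fullPostProb τ y {θ | l2dist θ (fullPostMean τ y) ≤ r y} = 1 - α)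
    (θ₀ : Fin n → ℝ) (p : ℕ) (hθ : θ₀ ∈ nearlyBlack n p) (hn : 0 < n)
    (hpn : (p : ℝ) ≤ n / 3) (hpz : p * z ≤ 2 * (n * τ))
    (hexp : Real.exp (-((p : ℝ) / 192000000)) / (1 - α) ≤ α / 2) {L : ℝ} (hL : 0 < L)
    (hL2 : L ^ 2 = 600000000000000 / α * 96000000) :
    ENNReal.ofReal (1 - α) ≤
      Pdata θ₀ {y | l2dist θ₀ (fullPostMean τ y) ≤ L * r y} := by
  have hτ0 : 0 < τ := hτe ▸ Real.exp_pos _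
  have hz0 : 0 < z := by linarith
  have hn' : (0 : ℝ) < n := by exact_mod_cast hn
  obtain ⟨hα0, hα1⟩ := hα
  set V : ℝ := n * (τ * z) with hV
  have hVpos : 0 < V := by positivity
  set M : ℝ := 600000000000000 / α with hM
  have hMpos : 0 < M := by positivity
  have hr0 : ∀ y, 0 ≤ r y := by
    intro y
    by_contra h
    push Not at h
    have he : {θ | l2dist θ (fullPostMean τ y) ≤ r y} = ∅ := by
      ext θ
      simp only [Set.mem_setOf_eq, Set.mem_empty_iff_false, iff_false, not_le]
      exact h.trans_le (Real.sqrt_nonneg _)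
    have := hr y
    rw [he] at this
    simp [fullPostProb] at this
    linarith
  have hcov : (Set.univ : Set (Fin n → ℝ)) ⊆
      {y | l2dist θ₀ (fullPostMean τ y) ≤ L * r y} ∪
        ({y | M * V ≤ ∑ i, (θ₀ i - postMean τ (y i)) ^ 2} ∪
          {y | r y ^ 2 ≤ V / 96000000}) := by
    intro y _
    by_cases h1 : M * V ≤ ∑ i, (θ₀ i - postMean τ (y i)) ^ 2
    · exact Or.inr (Or.inl h1)
    by_cases h2 : r y ^ 2 ≤ V / 96000000
    · exact Or.inr (Or.inr h2)
    left
    push Not at h1 h2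
    show Real.sqrt _ ≤ _
    apply Real.sqrt_le_iff.2
    refine ⟨mul_nonneg hL.le (hr0 y), ?_⟩
    rw [mul_pow, hL2]
    have : M * V ≤ M * 96000000 * r y ^ 2 := by
      have := mul_le_mul_of_nonneg_left h2.le hMpos.le
      linarith
    exact h1.le.trans this
  have hb1 : Pdata θ₀ {y | M * V ≤ ∑ i, (θ₀ i - postMean τ (y i)) ^ 2} ≤
      ENNReal.ofReal (α / 2) := by
    refine (bad1 hτe hz hτ2 θ₀ p hθ (mul_pos hMpos hVpos)).trans (ENNReal.ofReal_le_ofReal ?_)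
    rw [div_le_iff₀ (mul_pos hMpos hVpos)]
    have h1 : (p : ℝ) * z ^ 2 ≤ 2 * V := by
      have := mul_le_mul_of_nonneg_right hpz hz0.le
      rw [hV]; nlinarith
    have h2 : α / 2 * (M * V) = 300000000000000 * V := by
      rw [hM]; field_simp; norm_num
    rw [h2]; linarith
  have hb2 : Pdata θ₀ {y | r y ^ 2 ≤ V / 96000000} ≤ ENNReal.ofReal (α / 2) := by
    refine (bad2 hτe hz hτ2 ⟨hα0, hα1⟩ r hr θ₀ _).trans (ENNReal.ofReal_le_ofReal
      (le_trans ?_ hexp))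
    have h1a : 0 < 1 - α := by linarith
    rw [← Real.exp_add]
    apply div_le_div_of_nonneg_right _ h1a.le
    apply Real.exp_le_exp.2
    have hc : (({i | θ₀ i ≠ 0} : Finset (Fin n)).card : ℝ) ≤ p := by
      have h : ({i | θ₀ i ≠ 0} : Set (Fin n)).ncard ≤ p := hθ
      rw [Set.ncard_eq_toFinset_card', Set.toFinset_ofPred] at h
      exact_mod_cast h
    have hsum := Finset.card_filter_add_card_filter_not (s := (Finset.univ : Finset (Fin n)))
      (fun i => θ₀ i = 0)
    rw [Finset.card_univ, Fintype.card_fin] at hsum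
    have hsum' : (({i | θ₀ i = 0} : Finset (Fin n)).card : ℝ) +
      (({i | θ₀ i ≠ 0} : Finset (Fin n)).card : ℝ) = n := by exact_mod_cast hsum
    have hN0 : (n : ℝ) / 2 ≤ (({i | θ₀ i = 0} : Finset (Fin n)).card : ℝ) := by linarith
    set N0 : ℝ := (({i | θ₀ i = 0} : Finset (Fin n)).card : ℝ)
    have e1 : V / 96000000 / z ^ 2 = (n * τ / z) / 96000000 := by
      rw [hV]; field_simp
    have e2 : τ / (24000000 * z) * N0 ≥ (n * τ / z) / 48000000 := by
      have : τ / (24000000 * z) * (n / 2) ≤ τ / (24000000 * z) * N0 :=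
        mul_le_mul_of_nonneg_left hN0 (by positivity)
      refine le_trans (le_of_eq ?_) this
      field_simp; norm_num
    have e3 : (p : ℝ) / 2 ≤ n * τ / z := by
      rw [le_div_iff₀ hz0]; linarith
    rw [e1]
    linarith
  have hP : (1 : ℝ≥0∞) ≤ Pdata θ₀ {y | l2dist θ₀ (fullPostMean τ y) ≤ L * r y} +
      (ENNReal.ofReal (α / 2) + ENNReal.ofReal (α / 2)) := by
    calc (1 : ℝ≥0∞) = Pdata θ₀ Set.univ := measure_univ.symm
      _ ≤ _ := (measure_mono hcov).trans ((measure_union_le _ _).trans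
        (add_le_add le_rfl ((measure_union_le _ _).trans (add_le_add hb1 hb2))))
  rw [← ENNReal.ofReal_add (by linarith) (by linarith), add_halves] at hP
  rw [ENNReal.ofReal_sub _ hα0.le, ENNReal.ofReal_one]
  exact tsub_le_iff_right.2 hP

lemma zet_facts {τ : ℝ} (h0 : 0 < τ) (h : τ < Real.exp (-5)) :
    τ = Real.exp (-(zet τ ^ 2) / 2) ∧ 3 ≤ zet τ ∧ τ ≤ 1/32 ∧ zet τ ^ 2 = 2 * (-Real.log τ) := by
  have hl : Real.log τ < -5 := (Real.log_lt_iff_lt_exp h0).2 h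
  have hs : zet τ ^ 2 = 2 * (-Real.log τ) := by
    unfold zet
    rw [one_div, Real.log_inv, Real.sq_sqrt (by linarith)]
  refine ⟨?_, ?_, ?_, hs⟩
  · rw [hs]
    have : -(2 * -Real.log τ) / 2 = Real.log τ := by ring
    rw [this, Real.exp_log h0]
  · have : 0 ≤ zet τ := Real.sqrt_nonneg _
    nlinarith
  · have h5 : Real.exp 5 ≥ 32 := by
      have h1 : (2 : ℝ) ≤ Real.exp 1 := by have := Real.add_one_le_exp (1 : ℝ); linarith
      have h2 : Real.exp 5 = Real.exp 1 ^ 5 := by rw [← Real.exp_nat_mul]; norm_num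
      rw [h2]
      calc (32 : ℝ) = 2 ^ 5 := by norm_num
        _ ≤ _ := by gcongr
    refine h.le.trans ?_
    rw [Real.exp_neg, one_div]
    exact inv_anti₀ (by norm_num) h5

lemma pz_bound {N p : ℕ} {τ : ℝ} (h0 : 0 < τ) (h : τ < Real.exp (-5)) (hp : 1 ≤ p)
    (hpN : (p : ℝ) ≤ N / 3) (ht : tauOpt N p ≤ τ) : p * zet τ ≤ 2 * (N * τ) := by
  obtain ⟨-, hz, -, hs⟩ := zet_facts h0 h
  have hp' : (0 : ℝ) < p := by exact_mod_cast hp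
  have hN : (0 : ℝ) < N := by linarith
  set x := Real.log ((N : ℝ) / p) with hx
  have hx1 : 1 ≤ x := by
    rw [hx, Real.le_log_iff_exp_le (by positivity)]
    have : (3 : ℝ) ≤ N / p := by rw [le_div_iff₀ hp']; linarith
    exact (Real.exp_one_lt_d9.le.trans (by norm_num)).trans this
  have hsx : 1 ≤ Real.sqrt x := Real.one_le_sqrt.2 hx1
  have ht' : (p : ℝ) / N * Real.sqrt x ≤ τ := ht
  have hpn0 : (0 : ℝ) < p / N := by positivity
  have hle : (p : ℝ) / N ≤ τ := by nlinarith
  have hlog : -Real.log τ ≤ x := by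
    have h1 := Real.log_le_log hpn0 hle
    have h2 : Real.log ((p : ℝ) / N) = -x := by
      rw [hx, ← Real.log_inv, inv_div]
    linarith
  have hzx : zet τ ≤ 2 * Real.sqrt x := by
    refine (pow_le_pow_iff_left₀ (by linarith) (by positivity) two_ne_zero).1 ?_
    rw [mul_pow, Real.sq_sqrt (by linarith), hs]
    linarith
  have h3 : (p : ℝ) * Real.sqrt x ≤ N * τ := by
    have := mul_le_mul_of_nonneg_left ht' hN.le
    have e : (N : ℝ) * (p / N * Real.sqrt x) = p * Real.sqrt x := by field_simp
    linarith
  nlinarith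

theorem stmt_9
    (α : ℝ) (hα : α ∈ Set.Ioo (0 : ℝ) 1)
    (p : ℕ → ℕ) (hp : Tendsto p atTop atTop)
    (hpo : (fun n => (p n : ℝ)) =o[atTop] fun n => ((n : ℝ) + 1))
    (τ : ℕ → ℝ) (hτpos : ∀ n, 0 < τ n)
    (hτlb : ∀ n, tauOpt (n + 1) (p n) ≤ τ n)
    (hτ : Tendsto τ atTop (nhds 0))
    (rball : (n : ℕ) → (Fin (n + 1) → ℝ) → ℝ)
    (hrball : ∀ (n : ℕ) (y : Fin (n + 1) → ℝ),
      fullPostProb (τ n) y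
          {θ | l2dist θ (fullPostMean (τ n) y) ≤ rball n y} = 1 - α) :
    ∃ L > 0,
      ENNReal.ofReal (1 - α) ≤
        Filter.liminf
          (fun n =>
            ⨅ θ ∈ nearlyBlack (n + 1) (p n),
              Pdata θ
                {y : Fin (n + 1) → ℝ |
                  l2dist θ (fullPostMean (τ n) y) ≤ L * rball n y})
          atTop := by
  have hα0 := hα.1
  have hα1 := hα.2
  have hKpos : 0 < 600000000000000 / α * 96000000 := by positivity
  refine ⟨Real.sqrt (600000000000000 / α * 96000000), Real.sqrt_pos.2 hKpos,
    le_liminf_of_le (by isBoundedDefault) ?_⟩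
  have e1 : ∀ᶠ n in atTop, τ n < Real.exp (-5) := hτ.eventually_lt_const (Real.exp_pos _)
  have e2 : ∀ᶠ n in atTop, 1 ≤ p n := hp.eventually_ge_atTop 1
  have e3 : ∀ᶠ n in atTop, (p n : ℝ) ≤ ((n + 1 : ℕ) : ℝ) / 3 := by
    filter_upwards [hpo.bound (show (0 : ℝ) < 1 / 3 by norm_num)] with n hn
    rw [Real.norm_of_nonneg (by positivity), Real.norm_of_nonneg (by positivity)] at hn
    push_cast
    linarith
  have hpR : Tendsto (fun n => (p n : ℝ)) atTop atTop := tendsto_natCast_atTop_atTop.comp hp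
  have e4 : ∀ᶠ n in atTop, Real.exp (-((p n : ℝ) / 192000000)) / (1 - α) ≤ α / 2 := by
    have h1 : Tendsto (fun n => Real.exp (-((p n : ℝ) / 192000000)) / (1 - α)) atTop
        (nhds (0 / (1 - α))) :=
      (Real.tendsto_exp_neg_atTop_nhds_zero.comp
        (hpR.atTop_div_const (by norm_num))).div_const _
    rw [zero_div] at h1
    exact h1.eventually_le_const (by linarith)
  filter_upwards [e1, e2, e3, e4] with n h1 h2 h3 h4
  refine le_iInf₂ fun θ hθ => ?_
  obtain ⟨f1, f2, f3, -⟩ := zet_facts (hτpos n) h1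
  exact core f1 f2 f3 hα (rball n) (hrball n) θ (p n) hθ (Nat.succ_pos n) h3
    (pz_bound (hτpos n) h1 h2 h3 (hτlb n)) h4 (Real.sqrt_pos.2 hKpos) (Real.sq_sqrt hKpos.le)

end
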